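/- Assume GRH for L(s,χ). There is an absolute constant C such that for every primitive Dirichlet character χ mod M, every real t with |t| ≥ 2, every X with 4 ≤ X ≤ t², setting σ₁ = 1/2 + 4/log X: for all s = σ + it with σ ≥ σ₁, | L′/L(s,χ) + Σ_{n≤X²} Λ_X(n)χ(n)·n^{−s} | ≤ C·E_χ(X,t), where E_χ(X,t) = |Σ_{n≤X²} Λ_X(n)χ(n)·n^{−σ₁−it}| + log(M(1+|t|)). -/

import Mathlib

open Complex MeasureTheory ProbabilityTheory Filter Finset DirichletCharacter

noncomputable section

/-- The finset of primes `p ≤ X²`. -/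
def primesUptoSq (X : ℝ) : Finset ℕ := (Finset.range (⌊X ^ 2⌋₊ + 1)).filter Nat.Prime

/-- The finset of primes `p ≤ x`. -/
def primesUpto (x : ℝ) : Finset ℕ := (Finset.range (⌊x⌋₊ + 1)).filter Nat.Prime

/-- The Dirichlet polynomial `P_χ(γ) = ∑_{p ≤ X²} χ(p) p^{-1/2 - iγ}`. -/
def Pgamma {N : ℕ} (χ : DirichletCharacter ℂ N) (X γ : ℝ) : ℂ :=
  ∑ p ∈ primesUptoSq X, χ (p : ZMod N) * (p : ℂ) ^ (-(1 / 2 : ℂ) - I * γ)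

/-- `P_ℒ(γ) = a₁ P_{χ₁}(γ) + a₂ P_{χ₂}(γ)`. -/
def PLgamma {N₁ N₂ : ℕ} (a₁ a₂ : ℝ) (χ₁ : DirichletCharacter ℂ N₁)
    (χ₂ : DirichletCharacter ℂ N₂) (X γ : ℝ) : ℂ :=
  (a₁ : ℂ) * Pgamma χ₁ X γ + (a₂ : ℂ) * Pgamma χ₂ X γ

/-- The value of the random polynomial `P_χ(θ) = ∑_{p ≤ X²} χ(p) e^{2πiθ_p}/√p` at a
point `v = (θ_p)_p`. -/
def Ptheta {N : ℕ} (χ : DirichletCharacter ℂ N) (X : ℝ) (v : ℕ → ℝ) : ℂ :=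
  ∑ p ∈ primesUptoSq X, χ (p : ZMod N) * Complex.exp (2 * Real.pi * I * (v p)) / Real.sqrt p

/-- `P_ℒ(θ) = a₁ P_{χ₁}(θ) + a₂ P_{χ₂}(θ)`. -/
def PLtheta {N₁ N₂ : ℕ} (a₁ a₂ : ℝ) (χ₁ : DirichletCharacter ℂ N₁)
    (χ₂ : DirichletCharacter ℂ N₂) (X : ℝ) (v : ℕ → ℝ) : ℂ :=
  (a₁ : ℂ) * Ptheta χ₁ X v + (a₂ : ℂ) * Ptheta χ₂ X v

/-- The ordinates `γ ∈ (0, T]` of the zeros of `ζ` on the critical line (under RH, these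
are exactly the ordinates of the nontrivial zeros of `ζ` in the upper half plane up to `T`). -/
def zetaZerosIn (T : ℝ) : Set ℝ :=
  {γ : ℝ | 0 < γ ∧ γ ≤ T ∧ riemannZeta (1 / 2 + I * γ) = 0}

/-- `N(T)`, the number of nontrivial zeros of `ζ` with ordinate in `(0, T]`. -/
def NT (T : ℝ) : ℝ := ((zetaZerosIn T).ncard : ℝ)

/-- The Riemann Hypothesis: all nontrivial zeros of `ζ` lie on the critical line. -/
def RHzeta : Prop := ∀ s : ℂ, 0 < s.re → s.re < 1 → riemannZeta s = 0 → s.re = 1 / 2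

/-- GRH for `L(s, χ)`: all nontrivial zeros of `L(s,χ)` lie on the critical line. -/
def GRHchar {N : ℕ} [NeZero N] (χ : DirichletCharacter ℂ N) : Prop :=
  ∀ s : ℂ, 0 < s.re → s.re < 1 → LFunction χ s = 0 → s.re = 1 / 2

/-- Hypothesis 𝒟: no nontrivial zero of `L(s,χ)` coincides with a nontrivial zero of `ζ`. -/
def HypD {N : ℕ} [NeZero N] (χ : DirichletCharacter ℂ N) : Prop :=
  ∀ s : ℂ, 0 < s.re → s.re < 1 → riemannZeta s = 0 → LFunction χ s ≠ 0

/-- Hypothesis `H_{α,χ}`: there is `c > 0` such that for every `C ∈ (0,1)`, the limsup as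
`T → ∞` of the proportion of ordinates `γ ∈ (0,T]` of zeros of `ζ` lying within `C/log T`
of an ordinate of a (critical-line) zero of `L(s,χ)` is at most `c C^α`. -/
def HypH {N : ℕ} [NeZero N] (χ : DirichletCharacter ℂ N) (α : ℝ) : Prop :=
  ∃ c > (0 : ℝ), ∀ C : ℝ, 0 < C → C < 1 →
    Filter.limsup (fun T : ℝ =>
      (((zetaZerosIn T ∩ {γ : ℝ | ∃ x : ℝ,
          LFunction χ (1 / 2 + I * x) = 0 ∧ |x - γ| ≤ C / Real.log T}).ncard : ℝ) / NT T))
      Filter.atTop ≤ c * C ^ α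

/-- `Ψ = ∑_{p ≤ X²} 1/p`. -/
def Psi (X : ℝ) : ℝ := ∑ p ∈ primesUptoSq X, (1 : ℝ) / p

/-- `Ψ(T) = ∑_{p ≤ T} 1/p`. -/
def PsiT (T : ℝ) : ℝ := ∑ p ∈ primesUpto T, (1 : ℝ) / p

/-- The weight `w_X(n)`. -/
def wX (X : ℝ) (n : ℕ) : ℝ :=
  if (n : ℝ) ≤ X then 1 else Real.log (X ^ 2 / n) / Real.log X

/-- `Λ_X(n) = Λ(n) w_X(n)`. -/
def LambdaX (X : ℝ) (n : ℕ) : ℝ := ArithmeticFunction.vonMangoldt n * wX X n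

/-- `σ₁ = 1/2 + 4/log X`. -/
def sigma1 (X : ℝ) : ℝ := 1 / 2 + 4 / Real.log X

/-- `E_χ(X,t) = |∑_{n ≤ X²} Λ_X(n) χ(n) n^{-σ₁-it}| + log(M(1+|t|))`. -/
def EchiT {N : ℕ} (χ : DirichletCharacter ℂ N) (X t : ℝ) : ℝ :=
  ‖∑ m ∈ Finset.Icc 1 ⌊X ^ 2⌋₊,
      (LambdaX X m : ℂ) * χ (m : ZMod N) * (m : ℂ) ^ (-(sigma1 X : ℂ) - I * t)‖
    + Real.log (N * (1 + |t|))

/-!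
Let `f` be `L(s, χ)`, freed of its pole when there is one. Landau's lemma, applied on discs around
`2 + it` and combined with the absence of zeros to the right of the critical line, bounds
`-Re (f'/f)` there by a multiple of `log (M (2 + |t|))`, and `|f'/f|` by the same times
`1 + 1 / (Re s - 1/2)`.

Following Selberg, multiply `f'/f (z)` by `X ^ (2 (z - s)) - X ^ (z - s)`, which vanishes at
`z = s`, and add an entire function so that the result `P` stays bounded far to the right; then
`P' (s)` is `log X` times the error to be estimated, up to a contribution of the pole. Cauchy's
formula writes `P' (s)` as an integral over the line `Re z = 1/2 + 1 / log X`. The same integral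
with `f'/f` replaced by its complex conjugate vanishes, so `f'/f` may be replaced by twice its real
part, which is dominated by a harmonic function that grows slowly. The resulting integral of this
majorant is a Poisson integral and evaluates it at `σ₁ + it`, giving the error there times a
constant smaller than one, plus the terms of `E_χ`; taking `σ = σ₁` absorbs the former.
-/

open scoped Topology ComplexConjugate

section HalfPlane

variable {E : Type*} [NormedAddCommGroup E] {a b : ℝ}

/-- The filter of points tending to infinity within the closed right half-plane. -/
abbrev rightInfinity : Filter ℂ := Bornology.cobounded ℂ ⊓ 𝓟 {z : ℂ | 0 ≤ z.re}

lemma eventually_le_norm_rightInfinity (R : ℝ) : ∀ᶠ z in rightInfinity, R ≤ ‖z‖ :=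
  (eventually_cobounded_le_norm R).filter_mono inf_le_left

lemma eventually_ne_rightInfinity (c : ℂ) : ∀ᶠ z in rightInfinity, z ≠ c := by
  filter_upwards [eventually_le_norm_rightInfinity (‖c‖ + 1)] with z hz h
  rw [h] at hz
  linarith

lemma isBigO_rightInfinity_iff {H : ℂ → E} {g : ℂ → ℝ} :
    H =O[rightInfinity] g ↔
      ∃ C > 0, ∃ R : ℝ, ∀ z : ℂ, 0 ≤ z.re → R ≤ ‖z‖ → ‖H z‖ ≤ C * ‖g z‖ := by
  simp only [Asymptotics.isBigO_iff', eventually_inf_principal,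
    hasBasis_cobounded_norm.eventually_iff, true_and, Set.mem_ofPred_eq]
  exact exists_congr fun C => and_congr_right fun _ => exists_congr fun R =>
    forall_congr' fun z => forall_comm

lemma tendsto_mul_I_rightInfinity :
    Tendsto (fun y : ℝ => (y * I : ℂ)) (cocompact ℝ) rightInfinity := by
  refine tendsto_inf.mpr ⟨tendsto_norm_atTop_iff_cobounded.mp ?_, ?_⟩
  · exact tendsto_norm_cocompact_atTop.congr fun y => by simp
  · exact tendsto_principal.mpr (Eventually.of_forall fun y => by simp)

lemma isBigO_rpow_of_le {p q : ℝ} (h : p ≤ q) :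
    (fun z : ℂ => ‖z‖ ^ p) =O[rightInfinity] fun z => ‖z‖ ^ q := by
  refine .of_norm_eventuallyLE ?_
  filter_upwards [eventually_le_norm_rightInfinity 1] with z hz
  rw [Real.norm_of_nonneg (by positivity)]
  exact Real.rpow_le_rpow_of_exponent_le hz h

lemma isBigO_const_rpow (c : E) (ha : 0 ≤ a) :
    (fun _ : ℂ => c) =O[rightInfinity] fun z => ‖z‖ ^ a :=
  (Asymptotics.isBigO_const_const c one_ne_zero _).trans (by simpa using isBigO_rpow_of_le ha)

variable [NormedSpace ℂ E]

lemma isBigO_rpow_smul {f : ℂ → ℂ} {g : ℂ → E} {p q : ℝ}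
    (hf : f =O[rightInfinity] fun z => ‖z‖ ^ p) (hg : g =O[rightInfinity] fun z => ‖z‖ ^ q) :
    (fun z => f z • g z) =O[rightInfinity] fun z => ‖z‖ ^ (p + q) := by
  refine (hf.smul hg).congr' .rfl ?_
  filter_upwards [eventually_le_norm_rightInfinity 1] with z hz
  rw [Real.rpow_add (by positivity), smul_eq_mul]

lemma isBigO_add_const (c : ℂ) :
    (fun z : ℂ => z + c) =O[rightInfinity] fun z => ‖z‖ ^ (1 : ℝ) := by
  refine .add ?_ (isBigO_const_rpow c zero_le_one)
  simpa using (Asymptotics.isBigO_refl (fun z : ℂ => z) rightInfinity).norm_right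

lemma isBigO_inv_sub (c : ℂ) :
    (fun z : ℂ => (z - c)⁻¹) =O[rightInfinity] fun z => ‖z‖ ^ (-1 : ℝ) := by
  refine .of_bound 2 ?_
  filter_upwards [eventually_le_norm_rightInfinity (2 * ‖c‖ + 1)] with z hz
  have : 0 < ‖z‖ := by linarith [norm_nonneg c]
  have hhalf : ‖z‖ / 2 ≤ ‖z - c‖ := by linarith [norm_sub_norm_le z c]
  rw [norm_inv, Real.norm_of_nonneg (by positivity), Real.rpow_neg_one]
  calc ‖z - c‖⁻¹ ≤ (‖z‖ / 2)⁻¹ := by gcongr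
    _ = 2 * ‖z‖⁻¹ := by field_simp

lemma isBigO_inv_add_sq (c : ℂ) :
    (fun z : ℂ => ((z + c) ^ 2)⁻¹) =O[rightInfinity] fun z => ‖z‖ ^ (-2 : ℝ) := by
  refine (isBigO_rpow_smul (isBigO_inv_sub (-c)) (isBigO_inv_sub (-c))).congr (fun z => ?_)
    fun z => by norm_num
  rw [sub_neg_eq_add, sq, mul_inv, smul_eq_mul]

lemma isBigO_dslope {U : ℂ → E} (hU : U =O[rightInfinity] fun z => ‖z‖ ^ a) (ha : 0 ≤ a)
    (c : ℂ) : dslope U c =O[rightInfinity] fun z => ‖z‖ ^ (a - 1) := by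
  have h := isBigO_rpow_smul (isBigO_inv_sub c) (hU.sub (isBigO_const_rpow (U c) ha))
  rw [neg_add_eq_sub] at h
  refine h.congr' ?_ .rfl
  filter_upwards [eventually_ne_rightInfinity c] with z hz
  rw [dslope_of_ne _ hz, slope_def_module]

lemma integrable_mul_I_of_isBigO {H : ℂ → E} (hH : DiffContOnCl ℂ H {z | 0 < z.re}) (ha : 1 < a)
    (hO : H =O[rightInfinity] fun z => ‖z‖ ^ (-a)) : Integrable fun y : ℝ => H (y * I) := by
  have hcont : Continuous fun y : ℝ => H (y * I) :=
    hH.continuousOn.comp_continuous (by fun_prop) fun y => by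
      simp [closure_setOfPred_lt_re]
  have hdecay : (fun y : ℝ => ‖(y * I : ℂ)‖ ^ (-a)) =O[cocompact ℝ]
      fun y => (1 + ‖y‖) ^ (-a) := by
    refine .of_bound (2 ^ a) ?_
    filter_upwards [tendsto_norm_cocompact_atTop.eventually_ge_atTop 1] with y hy
    have : 0 < ‖y‖ := by linarith
    rw [norm_mul, norm_I, mul_one, norm_real, Real.norm_of_nonneg (r := _ ^ _) (by positivity),
      Real.norm_of_nonneg (r := _ ^ _) (by positivity)]
    calc ‖y‖ ^ (-a) ≤ ((1 + ‖y‖) / 2) ^ (-a) :=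
          Real.rpow_le_rpow_of_nonpos (by positivity) (by linarith) (by linarith)
      _ = 2 ^ a * (1 + ‖y‖) ^ (-a) := by
          rw [Real.div_rpow (by positivity) zero_le_two, Real.rpow_neg zero_le_two, div_inv_eq_mul,
            mul_comm]
  exact hcont.locallyIntegrable.integrable_of_isBigO_cocompact
    ((hO.comp_tendsto tendsto_mul_I_rightInfinity).trans hdecay)
    ((integrable_one_add_norm (by simpa using ha)).integrableAtFilter _)

lemma norm_intervalIntegral_mul_I_le {H : ℂ → E} {T B : ℝ} (hT : 0 < T)
    (hH : DiffContOnCl ℂ H {z | 0 < z.re})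
    (hB : ∀ z : ℂ, 0 ≤ z.re → T ≤ ‖z‖ → ‖H z‖ ≤ B) :
    ‖∫ y in (-T)..T, H (y * I)‖ ≤ 4 * T * B := by
  have hrect := integral_boundary_rect_eq_zero_of_continuousOn_of_differentiableOn H
    ⟨0, -T⟩ ⟨T, T⟩ (hH.continuousOn.mono fun z hz => ?_) (hH.differentiableOn.mono fun z hz => ?_)
  · simp only [ofReal_zero, zero_add, sub_eq_zero] at hrect
    have hhor (c : ℝ) (hc : |c| = T) : ‖∫ x in (0 : ℝ)..T, H (x + c * I)‖ ≤ B * |T - 0| := by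
      refine intervalIntegral.norm_integral_le_of_norm_le_const fun x hx => ?_
      rw [Set.uIoc_of_le hT.le] at hx
      exact hB _ (by simpa using hx.1.le) (by simpa [hc] using abs_im_le_norm (x + c * I))
    have hver : ‖∫ y in (-T)..T, H ((T : ℂ) + y * I)‖ ≤ B * |T - -T| := by
      refine intervalIntegral.norm_integral_le_of_norm_le_const fun y _ => ?_
      exact hB _ (by simpa using hT.le)
        (by simpa [abs_of_pos hT] using abs_re_le_norm ((T : ℂ) + y * I))
    have hbot := hhor (-T) (by rw [abs_neg, abs_of_pos hT])
    have htop := hhor T (abs_of_pos hT)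
    rw [sub_zero, abs_of_pos hT] at hbot htop
    rw [abs_of_pos (by linarith)] at hver
    calc ‖∫ y in (-T)..T, H (y * I)‖ = ‖I • ∫ y in (-T)..T, H (y * I)‖ := by
          rw [norm_smul, norm_I, one_mul]
      _ ≤ B * T + B * T + B * (T - -T) := by
          rw [← hrect]
          refine (norm_add_le _ _).trans (add_le_add ((norm_sub_le _ _).trans ?_) ?_)
          · exact add_le_add hbot htop
          · rwa [norm_smul, norm_I, one_mul]
      _ = 4 * T * B := by ring
  · have hre := (mem_reProdIm.mp hz).1
    rw [Set.uIcc_of_le hT.le] at hre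
    simpa [closure_setOfPred_lt_re] using hre.1
  · have hre := (mem_reProdIm.mp hz).1
    rw [min_eq_left hT.le] at hre
    exact hre.1

lemma integral_mul_I_eq_zero {H : ℂ → E} (hH : DiffContOnCl ℂ H {z | 0 < z.re}) (ha : 1 < a)
    (hO : H =O[rightInfinity] fun z => ‖z‖ ^ (-a)) : ∫ y : ℝ, H (y * I) = 0 := by
  obtain ⟨C, hC, R, hR⟩ := isBigO_rightInfinity_iff.mp hO
  refine tendsto_nhds_unique (intervalIntegral_tendsto_integral
    (integrable_mul_I_of_isBigO hH ha hO) tendsto_neg_atTop_atBot tendsto_id) ?_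
  have hlim : Tendsto (fun T : ℝ => 4 * C * T ^ (-(a - 1))) atTop (𝓝 0) := by
    simpa using (tendsto_rpow_neg_atTop (sub_pos.mpr ha)).const_mul (4 * C)
  refine squeeze_zero_norm' ?_ hlim
  filter_upwards [eventually_ge_atTop (max R 1)] with T hT
  obtain ⟨hTR, hT1⟩ := max_le_iff.mp hT
  have hT0 : 0 < T := by linarith
  refine (norm_intervalIntegral_mul_I_le hT0 hH (B := C * T ^ (-a)) fun z hz hTz => ?_).trans_eq ?_
  · refine (hR z hz (hTR.trans hTz)).trans ?_
    rw [Real.norm_of_nonneg (by positivity)]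
    exact mul_le_mul_of_nonneg_left (Real.rpow_le_rpow_of_nonpos hT0 hTz (by linarith)) hC.le
  · rw [show -(a - 1) = -a + 1 by ring, Real.rpow_add_one hT0.ne']
    ring

lemma diffContOnCl_dslope [CompleteSpace E] {f : ℂ → E} {s : Set ℂ} {c : ℂ}
    (hf : DiffContOnCl ℂ f s) (hs : s ∈ 𝓝 c) : DiffContOnCl ℂ (dslope f c) s :=
  ⟨(differentiableOn_dslope hs).mpr hf.differentiableOn,
    (continuousOn_dslope (mem_of_superset hs subset_closure)).mpr
      ⟨hf.continuousOn, hf.differentiableOn.differentiableAt hs⟩⟩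

lemma rightHalfPlane_mem_nhds (hb : 0 < b) : {z : ℂ | 0 < z.re} ∈ 𝓝 (b : ℂ) :=
  (isOpen_lt continuous_const continuous_re).mem_nhds (by simpa using hb)

lemma add_ofReal_ne_zero {z : ℂ} (hz : 0 ≤ z.re) (hb : 0 < b) : z + b ≠ 0 := fun h => by
  have hre := congrArg re h
  simp only [add_re, ofReal_re, zero_re] at hre
  linarith

lemma diffContOnCl_inv_add (hb : 0 < b) :
    DiffContOnCl ℂ (fun z : ℂ => (z + b)⁻¹) {z | 0 < z.re} := by
  refine DiffContOnCl.inv (Differentiable.diffContOnCl (by fun_prop)) fun z hz => ?_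
  rw [closure_setOfPred_lt_re] at hz
  exact add_ofReal_ne_zero hz hb

lemma mul_I_sub_ne_zero (hb : b ≠ 0) (y : ℝ) : (y * I - b : ℂ) ≠ 0 := fun h =>
  hb (by simpa using congrArg re h)

lemma sq_add_sq_eq_neg_mul (y b : ℝ) :
    ((y ^ 2 + b ^ 2 : ℝ) : ℂ) = -((y * I - b) * (y * I + b)) := by
  push_cast
  linear_combination (y : ℂ) ^ 2 * I_sq

lemma inv_sq_add_sq_eq (hb : b ≠ 0) (y : ℝ) :
    (y ^ 2 + b ^ 2)⁻¹ = (b ^ 2)⁻¹ * (1 + (y / b) ^ 2)⁻¹ := by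
  field_simp
  ring

lemma integrable_inv_sq_add_sq (hb : b ≠ 0) : Integrable fun y : ℝ => (y ^ 2 + b ^ 2)⁻¹ := by
  simp only [inv_sq_add_sq_eq hb]
  exact (integrable_inv_one_add_sq.comp_div hb).const_mul _

lemma integral_univ_inv_sq_add_sq (hb : 0 < b) : ∫ y : ℝ, (y ^ 2 + b ^ 2)⁻¹ = Real.pi / b := by
  simp only [inv_sq_add_sq_eq hb.ne']
  rw [integral_const_mul, Measure.integral_comp_div (fun x : ℝ => (1 + x ^ 2)⁻¹) b,
    integral_univ_inv_one_add_sq, abs_of_pos hb, smul_eq_mul]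
  field_simp

section Poisson

variable [CompleteSpace E] {U : ℂ → E} (hU : DiffContOnCl ℂ U {z | 0 < z.re})
  (hO : U =O[rightInfinity] fun z => ‖z‖ ^ a) (ha : 0 ≤ a) (ha1 : a < 1) (hb : 0 < b)

include hU hO ha ha1 hb

-- The function integrated over the imaginary axis is `-(z + b)⁻¹ • dslope U b z`.
lemma poisson_difference :
    Integrable (fun y : ℝ => (y ^ 2 + b ^ 2)⁻¹ • (U (y * I) - U b)) ∧
      ∫ y : ℝ, (y ^ 2 + b ^ 2)⁻¹ • (U (y * I) - U b) = 0 := by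
  have hd : DiffContOnCl ℂ (fun z : ℂ => -((z + b)⁻¹ • dslope U b z)) {z | 0 < z.re} :=
    ((diffContOnCl_inv_add hb).smul (diffContOnCl_dslope hU (rightHalfPlane_mem_nhds hb))).neg
  have hdO : (fun z : ℂ => -((z + b)⁻¹ • dslope U b z)) =O[rightInfinity]
      fun z => ‖z‖ ^ (-(2 - a)) := by
    have h := (isBigO_rpow_smul (isBigO_inv_sub (-b)) (isBigO_dslope hO ha b)).neg_left
    exact h.congr (fun z => by rw [sub_neg_eq_add]) fun z => by ring_nf
  have haxis (y : ℝ) : -((y * I + b : ℂ)⁻¹ • dslope U b (y * I)) =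
      (y ^ 2 + b ^ 2)⁻¹ • (U (y * I) - U b) := by
    rw [dslope_of_ne _ (sub_ne_zero.mp (mul_I_sub_ne_zero hb.ne' y)), slope_def_module, smul_smul,
      ← neg_smul, ← Complex.coe_smul, ofReal_inv, sq_add_sq_eq_neg_mul, inv_neg, mul_inv, mul_comm]
  simp only [← haxis]
  exact ⟨integrable_mul_I_of_isBigO hd (by linarith) hdO,
    integral_mul_I_eq_zero hd (by linarith) hdO⟩

lemma integrable_poisson : Integrable fun y : ℝ => (y ^ 2 + b ^ 2)⁻¹ • U (y * I) := by
  refine ((poisson_difference hU hO ha ha1 hb).1.add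
    ((integrable_inv_sq_add_sq hb.ne').smul_const (U b))).congr (.of_forall fun y => ?_)
  simp only [Pi.add_apply, smul_sub, sub_add_cancel]

lemma integral_poisson :
    ∫ y : ℝ, (y ^ 2 + b ^ 2)⁻¹ • U (y * I) = (Real.pi / b) • U b := by
  have h := (poisson_difference hU hO ha ha1 hb).2
  simp only [smul_sub] at h
  rwa [integral_sub (integrable_poisson hU hO ha ha1 hb)
    ((integrable_inv_sq_add_sq hb.ne').smul_const (U b)), integral_smul_const,
    integral_univ_inv_sq_add_sq hb, sub_eq_zero] at h

end Poisson

lemma diffContOnCl_inv_add_sq (hb : 0 < b) :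
    DiffContOnCl ℂ (fun z : ℂ => ((z + b) ^ 2)⁻¹) {z | 0 < z.re} := by
  refine DiffContOnCl.inv (Differentiable.diffContOnCl (by fun_prop)) fun z hz => ?_
  rw [closure_setOfPred_lt_re] at hz
  exact pow_ne_zero 2 (add_ofReal_ne_zero hz hb)

section DoublePole

variable (ha1 : a < 1) (hb : 0 < b)

include ha1 hb

lemma integral_inv_add_sq_smul_eq_zero {G : ℂ → E} (hG : DiffContOnCl ℂ G {z | 0 < z.re})
    (hO : G =O[rightInfinity] fun z => ‖z‖ ^ a) :
    Integrable (fun y : ℝ => ((y * I + b : ℂ) ^ 2)⁻¹ • G (y * I)) ∧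
      ∫ y : ℝ, ((y * I + b : ℂ) ^ 2)⁻¹ • G (y * I) = 0 := by
  have hd := (diffContOnCl_inv_add_sq hb).smul hG
  have hdO := (isBigO_rpow_smul (isBigO_inv_add_sq b) hO).congr_right
    (g₂ := fun z : ℂ => ‖z‖ ^ (-(2 - a))) fun z => by ring_nf
  exact ⟨integrable_mul_I_of_isBigO hd (by linarith) hdO,
    integral_mul_I_eq_zero hd (by linarith) hdO⟩

lemma integral_inv_sub_sq_smul_eq_zero {J : ℂ → E} (hJ : DiffContOnCl ℂ J {z | z.re < 0})
    (hO : (fun z => J (-z)) =O[rightInfinity] fun z => ‖z‖ ^ a) :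
    Integrable (fun y : ℝ => ((y * I - b : ℂ) ^ 2)⁻¹ • J (y * I)) ∧
      ∫ y : ℝ, ((y * I - b : ℂ) ^ 2)⁻¹ • J (y * I) = 0 := by
  have hd : DiffContOnCl ℂ (fun z => J (-z)) {z | 0 < z.re} :=
    hJ.comp (Differentiable.diffContOnCl differentiable_neg) fun z hz => by
      simpa using hz
  have haxis : (fun y : ℝ => ((y * I + b : ℂ) ^ 2)⁻¹ • J (-(y * I))) =
      fun y : ℝ => (fun x : ℝ => ((x * I - b : ℂ) ^ 2)⁻¹ • J (x * I)) (-y) := by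
    funext y
    push_cast
    ring_nf
  have h := integral_inv_add_sq_smul_eq_zero ha1 hb hd hO
  rw [haxis] at h
  exact ⟨by simpa using h.1.comp_neg, by rw [← h.2, integral_neg_eq_self
    (fun x : ℝ => ((x * I - b : ℂ) ^ 2)⁻¹ • J (x * I))]⟩

end DoublePole

section CauchyDeriv

variable [CompleteSpace E] {P : ℂ → E} (hP : DiffContOnCl ℂ P {z | 0 < z.re})
  (hO : P =O[rightInfinity] fun z => ‖z‖ ^ a) (ha : 0 ≤ a) (ha1 : a < 1) (hb : 0 < b)

include hP hO ha ha1 hb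

-- Poisson's formula is applied to `(z + b) • dslope P b z`, whose value at `b` is `2b • P'(b)`.
lemma cauchy_deriv_difference :
    Integrable (fun y : ℝ => ((y * I - b : ℂ) ^ 2)⁻¹ • (P (y * I) - P b)) ∧
      ∫ y : ℝ, ((y * I - b : ℂ) ^ 2)⁻¹ • (P (y * I) - P b) = -(2 * Real.pi) • deriv P b := by
  set W : ℂ → E := fun z => (z + b) • dslope P b z with hW
  have hWd : DiffContOnCl ℂ W {z | 0 < z.re} :=
    (Differentiable.diffContOnCl (by fun_prop)).smul
      (diffContOnCl_dslope hP (rightHalfPlane_mem_nhds hb))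
  have hWO : W =O[rightInfinity] fun z => ‖z‖ ^ a :=
    (isBigO_rpow_smul (isBigO_add_const b) (isBigO_dslope hO ha b)).congr_right fun z => by
      rw [add_sub_cancel]
  have haxis (y : ℝ) : ((y * I - b : ℂ) ^ 2)⁻¹ • (P (y * I) - P b) =
      -((y ^ 2 + b ^ 2)⁻¹ • W (y * I)) := by
    have hsub := mul_I_sub_ne_zero hb.ne' y
    have hadd : (y * I + b : ℂ) ≠ 0 := add_ofReal_ne_zero (by simp) hb
    simp only [hW]
    rw [dslope_of_ne _ (sub_ne_zero.mp hsub), slope_def_module, smul_smul, ← Complex.coe_smul,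
      smul_smul, ← neg_smul, ofReal_inv, sq_add_sq_eq_neg_mul]
    congr 1
    field_simp
  simp only [haxis]
  refine ⟨(integrable_poisson hWd hWO ha ha1 hb).neg, ?_⟩
  rw [integral_neg, integral_poisson hWd hWO ha ha1 hb, neg_smul, hW]
  simp only [dslope_same, ← Complex.coe_smul, smul_smul]
  congr 2
  have hne : (b : ℂ) ≠ 0 := mod_cast hb.ne'
  push_cast
  field_simp
  ring

lemma integrable_cauchy_deriv :
    Integrable fun y : ℝ => ((y * I - b : ℂ) ^ 2)⁻¹ • P (y * I) := by
  refine ((cauchy_deriv_difference hP hO ha ha1 hb).1.add (integral_inv_sub_sq_smul_eq_zero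
    (J := fun _ => P b) ha1 hb diffContOnCl_const (isBigO_const_rpow _ ha)).1).congr
    (.of_forall fun y => ?_)
  simp only [Pi.add_apply, smul_sub, sub_add_cancel]

lemma integral_cauchy_deriv :
    ∫ y : ℝ, ((y * I - b : ℂ) ^ 2)⁻¹ • P (y * I) = -(2 * Real.pi) • deriv P b := by
  obtain ⟨hinteg, hzero⟩ := integral_inv_sub_sq_smul_eq_zero (J := fun _ => P b) ha1 hb
    diffContOnCl_const (isBigO_const_rpow _ ha)
  have h := (cauchy_deriv_difference hP hO ha ha1 hb).2
  simp only [smul_sub] at h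
  rwa [integral_sub (integrable_cauchy_deriv hP hO ha ha1 hb) hinteg, hzero, sub_zero] at h

end CauchyDeriv

lemma re_poisson {U : ℂ → ℂ} (hU : DiffContOnCl ℂ U {z | 0 < z.re})
    (hO : U =O[rightInfinity] fun z => ‖z‖ ^ a) (ha : 0 ≤ a) (ha1 : a < 1) (hb : 0 < b) :
    Integrable (fun y : ℝ => (y ^ 2 + b ^ 2)⁻¹ * (U (y * I)).re) ∧
      ∫ y : ℝ, (y ^ 2 + b ^ 2)⁻¹ * (U (y * I)).re = Real.pi / b * (U b).re := by
  have hinteg := integrable_poisson hU hO ha ha1 hb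
  have hre (y : ℝ) : (y ^ 2 + b ^ 2)⁻¹ * (U (y * I)).re =
      RCLike.re ((y ^ 2 + b ^ 2)⁻¹ • U (y * I)) := by
    rw [RCLike.re_to_complex, smul_re, smul_eq_mul]
  simp only [hre]
  refine ⟨hinteg.re, ?_⟩
  rw [integral_re hinteg, integral_poisson hU hO ha ha1 hb, RCLike.re_to_complex, smul_re,
    smul_eq_mul]

section Kernel

variable {q G : ℂ → ℂ} {A : ℝ} (hq : Differentiable ℂ q)
  (hqA : ∀ w : ℂ, w.re ≤ -b → ‖q w‖ ≤ A) (hqconj : ∀ w, q (conj w) = conj (q w))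
  (hG : DiffContOnCl ℂ G {z | 0 < z.re}) (hGO : G =O[rightInfinity] fun z => ‖z‖ ^ a)
  (ha1 : a < 1) (hb : 0 < b)

include hq hqA hqconj hG hGO ha1 hb

-- On the imaginary axis `conj (G z)` is the value at `z` of a function holomorphic to the left.
lemma integral_kernel_mul_conj_eq_zero :
    Integrable (fun y : ℝ => ((y * I - b : ℂ) ^ 2)⁻¹ * q (y * I - b) * conj (G (y * I))) ∧
      ∫ y : ℝ, ((y * I - b : ℂ) ^ 2)⁻¹ * q (y * I - b) * conj (G (y * I)) = 0 := by
  have hd : DiffContOnCl ℂ (fun z => q (-z - b) • G z) {z | 0 < z.re} :=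
    (Differentiable.diffContOnCl (hq.comp (by fun_prop))).smul hG
  have hqO : (fun z : ℂ => q (-z - b)) =O[rightInfinity] fun z => ‖z‖ ^ (0 : ℝ) := by
    refine .of_bound A (eventually_inf_principal.mpr (.of_forall fun z hz => ?_))
    simpa using hqA (-z - b) (by simpa using hz)
  have hdO : (fun z => q (-z - b) • G z) =O[rightInfinity] fun z => ‖z‖ ^ a := by
    simpa using isBigO_rpow_smul hqO hGO
  obtain ⟨hinteg, hzero⟩ := integral_inv_add_sq_smul_eq_zero ha1 hb hd hdO
  have hconj (y : ℝ) : ((y * I - b : ℂ) ^ 2)⁻¹ * q (y * I - b) * conj (G (y * I)) =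
      conj (((y * I + b : ℂ) ^ 2)⁻¹ • q (-(y * I) - b) • G (y * I)) := by
    simp only [smul_eq_mul, map_mul, map_inv₀, map_pow, map_add, conj_ofReal, conj_I, ← hqconj,
      map_sub, map_neg]
    ring_nf
  simp only [hconj]
  refine ⟨(LinearIsometryEquiv.integrable_comp_iff conjLIE).mpr hinteg, ?_⟩
  rw [integral_conj, hzero, map_zero]

lemma integral_kernel_mul_re {J : ℂ → ℂ} (ha : 0 ≤ a) (hJ : Differentiable ℂ J)
    (hJO : (fun z => J (-z)) =O[rightInfinity] fun z => ‖z‖ ^ a)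
    (hPO : (fun z => G z * q (z - b) + J z) =O[rightInfinity] fun z => ‖z‖ ^ a) :
    ∫ y : ℝ, ((y * I - b : ℂ) ^ 2)⁻¹ * q (y * I - b) * (2 * (G (y * I)).re) =
      -(2 * Real.pi) * deriv (fun z => G z * q (z - b) + J z) b := by
  set P : ℂ → ℂ := fun z => G z * q (z - b) + J z with hP
  have hPd : DiffContOnCl ℂ P {z | 0 < z.re} :=
    (hG.smul (Differentiable.diffContOnCl (hq.comp (by fun_prop)))).add hJ.diffContOnCl
  obtain ⟨hconjI, hconj⟩ := integral_kernel_mul_conj_eq_zero hq hqA hqconj hG hGO ha1 hb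
  obtain ⟨hJI, hJ0⟩ := integral_inv_sub_sq_smul_eq_zero ha1 hb hJ.diffContOnCl hJO
  have hPI := integrable_cauchy_deriv hPd hPO ha ha1 hb
  have hsplit (y : ℝ) : ((y * I - b : ℂ) ^ 2)⁻¹ * q (y * I - b) * (2 * (G (y * I)).re) =
      ((y * I - b : ℂ) ^ 2)⁻¹ • P (y * I) - ((y * I - b : ℂ) ^ 2)⁻¹ • J (y * I) +
        ((y * I - b : ℂ) ^ 2)⁻¹ * q (y * I - b) * conj (G (y * I)) := by
    have hre : (2 * (G (y * I)).re : ℂ) = G (y * I) + conj (G (y * I)) := by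
      rw [add_conj]
      push_cast
      rfl
    rw [hre, hP]
    simp only [smul_eq_mul]
    ring
  simp only [hsplit]
  rw [integral_add ?_ hconjI, integral_sub hPI hJI, hJ0, hconj,
    integral_cauchy_deriv hPd hPO ha ha1 hb, sub_zero, add_zero, ← Complex.coe_smul, smul_eq_mul]
  · push_cast
    rfl
  · exact hPI.sub hJI

theorem norm_deriv_le_of_abs_re_le {J U : ℂ → ℂ} {b₁ : ℝ} (ha : 0 ≤ a) (hJ : Differentiable ℂ J)
    (hJO : (fun z => J (-z)) =O[rightInfinity] fun z => ‖z‖ ^ a)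
    (hPO : (fun z => G z * q (z - b) + J z) =O[rightInfinity] fun z => ‖z‖ ^ a)
    (hU : DiffContOnCl ℂ U {z | 0 < z.re}) (hUO : U =O[rightInfinity] fun z => ‖z‖ ^ a)
    (hGU : ∀ y : ℝ, |(G (y * I)).re| ≤ (U (y * I)).re) (hb₁ : 0 < b₁) (hb₁b : b₁ ≤ b) :
    ‖deriv (fun z => G z * q (z - b) + J z) b‖ ≤ A / b₁ * (U b₁).re := by
  obtain ⟨hUI, hUint⟩ := re_poisson hU hUO ha ha1 hb₁
  have hA : 0 ≤ A := (norm_nonneg _).trans (hqA (-b) (by simp))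
  have hkernel (y : ℝ) : ‖((y * I - b : ℂ) ^ 2)⁻¹ * q (y * I - b) * (2 * (G (y * I)).re)‖ ≤
      2 * A * ((y ^ 2 + b₁ ^ 2)⁻¹ * (U (y * I)).re) := by
    have hdenom : ‖((y * I - b : ℂ) ^ 2)⁻¹‖ ≤ (y ^ 2 + b₁ ^ 2)⁻¹ := by
      rw [norm_inv, norm_pow, ← normSq_eq_norm_sq, normSq_apply]
      simp only [sub_re, mul_re, ofReal_re, I_re, ofReal_im, I_im, sub_im, mul_im]
      refine inv_anti₀ (by positivity) ?_
      nlinarith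
    rw [norm_mul, norm_mul, norm_mul, norm_real, Complex.norm_ofNat, Real.norm_eq_abs]
    calc ‖((y * I - b : ℂ) ^ 2)⁻¹‖ * ‖q (y * I - b)‖ * (2 * |(G (y * I)).re|)
        ≤ (y ^ 2 + b₁ ^ 2)⁻¹ * A * (2 * (U (y * I)).re) := by
          gcongr
          · exact hqA _ (by simp)
          · exact hGU y
      _ = 2 * A * ((y ^ 2 + b₁ ^ 2)⁻¹ * (U (y * I)).re) := by ring
  have hle := norm_integral_le_of_norm_le (hUI.const_mul (2 * A)) (.of_forall hkernel)
  rw [integral_kernel_mul_re hq hqA hqconj hG hGO ha1 hb ha hJ hJO hPO, integral_const_mul, hUint,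
    norm_mul, norm_neg, norm_mul, Complex.norm_ofNat, norm_real,
    Real.norm_of_nonneg Real.pi_pos.le] at hle
  refine le_of_mul_le_mul_left (hle.trans_eq ?_) (by positivity : 0 < 2 * Real.pi)
  ring

end Kernel

end HalfPlane

section Landau

lemma sub_mul_dslope {f : ℂ → ℂ} {ρ : ℂ} (hρ : f ρ = 0) (z : ℂ) :
    (z - ρ) * dslope f ρ z = f z := by
  simpa [hρ] using sub_smul_dslope f ρ z

lemma exists_eqOn_mul_exp {f : ℂ → ℂ} {c : ℂ} {r : ℝ}
    (hf : DifferentiableOn ℂ f (Metric.ball c r)) (hf0 : ∀ z ∈ Metric.ball c r, f z ≠ 0) :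
    ∃ h : ℂ → ℂ, h c = 0 ∧ (∀ z ∈ Metric.ball c r, HasDerivAt h (logDeriv f z) z) ∧
      Set.EqOn f (fun z => f c * cexp (h z)) (Metric.ball c r) := by
  obtain ⟨h, hc, hh⟩ := (((hf.deriv Metric.isOpen_ball).div hf hf0).isExactOn_ball).with_val_at c 0
  have hexp : DifferentiableOn ℂ (fun z => cexp (h z)) (Metric.ball c r) := fun z hz =>
    (hh z hz).cexp.differentiableAt.differentiableWithinAt
  have hlog : Set.EqOn (logDeriv f) (logDeriv fun z => cexp (h z))
      (Metric.ball c r) := fun z hz => by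
    rw [logDeriv_apply (fun z => cexp (h z)), (hh z hz).cexp.deriv,
      mul_div_cancel_left₀ _ (exp_ne_zero _), Pi.div_apply, logDeriv_apply]
  obtain ⟨k, -, hk⟩ := (logDeriv_eqOn_iff hf hexp Metric.isOpen_ball
    (convex_ball c r).isPreconnected (fun z _ => exp_ne_zero _) hf0).mp hlog
  refine ⟨h, hc, hh, fun z hz => ?_⟩
  have hkc : f c = k := by
    simpa [hc] using hk (Metric.mem_ball_self (Metric.pos_of_mem_ball hz))
  simpa [hkc] using hk hz

lemma norm_deriv_le_of_re_le {h : ℂ → ℂ} {r r₁ A : ℝ} (hr : r < r₁)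
    (hd : DifferentiableOn ℂ h (Metric.ball 0 r₁)) (h0 : h 0 = 0) (hA : 0 < A)
    (hre : ∀ z ∈ Metric.ball 0 r₁, (h z).re ≤ A) {w : ℂ} (hw : ‖w‖ ≤ r) :
    ‖deriv h w‖ ≤ 4 * (r₁ + r) / (r₁ - r) ^ 2 * A := by
  have hr0 : 0 ≤ r := (norm_nonneg w).trans hw
  have hr' : 0 < r₁ - r := by linarith
  have hsub : Metric.closedBall w ((r₁ - r) / 2) ⊆ Metric.closedBall 0 ((r₁ + r) / 2) :=
    Metric.closedBall_subset_closedBall' (by rw [dist_zero_right]; linarith)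
  have hball : Metric.closedBall (0 : ℂ) ((r₁ + r) / 2) ⊆ Metric.ball 0 r₁ :=
    Metric.closedBall_subset_ball (by linarith)
  have hsphere (z : ℂ) (hz : z ∈ Metric.sphere w ((r₁ - r) / 2)) :
      ‖h z‖ ≤ 2 * A * ((r₁ + r) / 2) / ((r₁ - r) / 2) := by
    have hz' := hsub (Metric.sphere_subset_closedBall hz)
    have hzr : ‖z‖ ≤ (r₁ + r) / 2 := mem_closedBall_zero_iff.mp hz'
    refine (borelCaratheodory_zero hA hd hre (by linarith) (hball hz') h0).trans ?_
    have hr₁z : (r₁ - r) / 2 ≤ r₁ - ‖z‖ := by linarith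
    have hpos : 0 ≤ 2 * A * ((r₁ + r) / 2) := mul_nonneg (by linarith) (by linarith)
    gcongr
  refine (norm_deriv_le_of_forall_mem_sphere_norm_le (by linarith)
    (((hd.mono hball).mono hsub).diffContOnCl_ball subset_rfl) hsphere).trans_eq ?_
  field_simp
  ring

lemma norm_logDeriv_le_of_ne_zero {f : ℂ → ℂ} {r r₁ A : ℝ} (hr : r < r₁)
    (hf : DifferentiableOn ℂ f (Metric.ball 0 r₁)) (hf0 : ∀ z ∈ Metric.ball 0 r₁, f z ≠ 0)
    (hfA : ∀ z ∈ Metric.ball 0 r₁, ‖f z‖ ≤ ‖f 0‖ * Real.exp A) {w : ℂ} (hw : ‖w‖ ≤ r) :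
    ‖logDeriv f w‖ ≤ 4 * (r₁ + r) / (r₁ - r) ^ 2 * A := by
  obtain ⟨h, hh0, hh, hfh⟩ := exists_eqOn_mul_exp hf hf0
  have hr0 : 0 ≤ r := (norm_nonneg w).trans hw
  have h0 : (0 : ℂ) ∈ Metric.ball 0 r₁ := Metric.mem_ball_self (by linarith)
  have hre (z : ℂ) (hz : z ∈ Metric.ball 0 r₁) : (h z).re ≤ A := by
    have hz' := hfA z hz
    rw [hfh hz, norm_mul, Complex.norm_exp] at hz'
    exact Real.exp_le_exp.mp (le_of_mul_le_mul_left hz' (norm_pos_iff.mpr (hf0 0 h0)))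
  have hA : 0 ≤ A := by simpa [hh0] using hre 0 h0
  have hK : 0 < 4 * (r₁ + r) / (r₁ - r) ^ 2 :=
    div_pos (by linarith) (pow_pos (by linarith) 2)
  rw [← div_le_iff₀' hK]
  refine le_of_forall_gt_imp_ge_of_dense fun A' hA' => (div_le_iff₀' hK).mpr ?_
  rw [← (hh w (mem_ball_zero_iff.mpr (hw.trans_lt hr))).deriv]
  exact norm_deriv_le_of_re_le hr
    (fun z hz => (hh z hz).differentiableAt.differentiableWithinAt) hh0 (hA.trans_lt hA')
    (fun z hz => (hre z hz).trans hA'.le) hw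

/-- The quotient of `f` by the Blaschke factor of the disc `|z| < R` that vanishes at the zero `ρ`
of `f`; it has the same modulus as `f` on the circle `|z| = R`. -/
def blaschkeQuotient (R : ℝ) (ρ : ℂ) (f : ℂ → ℂ) (z : ℂ) : ℂ :=
  dslope f ρ z * ((R ^ 2 - conj ρ * z) / R)

variable {f : ℂ → ℂ} {R : ℝ} {ρ : ℂ}

lemma sq_sub_conj_mul_ne_zero {z : ℂ} (hρ : ‖ρ‖ < R) (hz : ‖z‖ ≤ R) :
    (R ^ 2 - conj ρ * z : ℂ) ≠ 0 := fun h => by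
  have hR : 0 < R := (norm_nonneg ρ).trans_lt hρ
  have h' := congrArg norm (sub_eq_zero.mp h)
  rw [norm_mul, RCLike.norm_conj, norm_pow, norm_real, Real.norm_of_nonneg hR.le] at h'
  nlinarith [norm_nonneg ρ, norm_nonneg z]

lemma eq_mul_blaschkeQuotient (hρ : ‖ρ‖ < R) (hfρ : f ρ = 0) {z : ℂ} (hz : ‖z‖ ≤ R) :
    f z = (z - ρ) * (R / (R ^ 2 - conj ρ * z)) * blaschkeQuotient R ρ f z := by
  have hne := sq_sub_conj_mul_ne_zero hρ hz
  have hR : (R : ℂ) ≠ 0 := ofReal_ne_zero.mpr ((norm_nonneg ρ).trans_lt hρ).ne'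
  rw [blaschkeQuotient, ← sub_mul_dslope hfρ, mul_assoc, mul_left_comm (R / _ : ℂ),
    div_mul_div_cancel₀' hR, div_self hne, mul_one]

lemma diffContOnCl_blaschkeQuotient (hf : DiffContOnCl ℂ f (Metric.ball 0 R)) (hρ : ‖ρ‖ < R) :
    DiffContOnCl ℂ (blaschkeQuotient R ρ f) (Metric.ball 0 R) :=
  (diffContOnCl_dslope hf (Metric.isOpen_ball.mem_nhds (mem_ball_zero_iff.mpr hρ))).smul
    (Differentiable.diffContOnCl (by fun_prop))

lemma norm_mul_norm_blaschkeQuotient_zero (hρ : ‖ρ‖ < R) (hfρ : f ρ = 0) :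
    ‖ρ‖ * ‖blaschkeQuotient R ρ f 0‖ = R * ‖f 0‖ := by
  have hR : 0 < R := (norm_nonneg ρ).trans_lt hρ
  rw [eq_mul_blaschkeQuotient hρ hfρ (z := 0) (by simpa using hR.le)]
  simp only [zero_sub, mul_zero, sub_zero, norm_mul, norm_neg, norm_div, norm_pow, norm_real,
    Real.norm_of_nonneg hR.le]
  field_simp

lemma norm_blaschkeQuotient_le (hf : DiffContOnCl ℂ f (Metric.ball 0 R)) (hρ : ‖ρ‖ < R)
    (hfρ : f ρ = 0) {B : ℝ} (hB : ∀ z ∈ Metric.closedBall 0 R, ‖f z‖ ≤ B) :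
    ∀ z ∈ Metric.closedBall 0 R, ‖blaschkeQuotient R ρ f z‖ ≤ B := fun z hz => by
  have hR : 0 < R := (norm_nonneg ρ).trans_lt hρ
  refine norm_le_of_forall_mem_frontier_norm_le Metric.isBounded_ball
    (diffContOnCl_blaschkeQuotient hf hρ) (fun y hy => ?_) (by rwa [closure_ball _ hR.ne'])
  rw [frontier_ball _ hR.ne', mem_sphere_zero_iff_norm] at hy
  have hconj : (R ^ 2 - conj ρ * y : ℂ) = conj (y - ρ) * y := by
    rw [map_sub, sub_mul, conj_mul', hy]
  refine le_of_eq_of_le ?_ (hB y (mem_closedBall_zero_iff.mpr hy.le))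
  rw [blaschkeQuotient, ← sub_mul_dslope hfρ, hconj]
  simp only [norm_mul, norm_div, RCLike.norm_conj, norm_real, Real.norm_of_nonneg hR.le, hy]
  field_simp

lemma norm_logDeriv_sub_logDeriv_blaschkeQuotient_le (hf : DiffContOnCl ℂ f (Metric.ball 0 R))
    (hρ : ‖ρ‖ < R) (hfρ : f ρ = 0) {r : ℝ} (hr : r < R) {w : ℂ} (hw : ‖w‖ ≤ r) (hfw : f w ≠ 0) :
    ‖logDeriv f w - (w - ρ)⁻¹ - logDeriv (blaschkeQuotient R ρ f) w‖ ≤ (R - r)⁻¹ := by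
  have hR : 0 < R := (norm_nonneg ρ).trans_lt hρ
  have hwR := hw.trans hr.le
  have hR' : (R : ℂ) ≠ 0 := ofReal_ne_zero.mpr hR.ne'
  have hne := sq_sub_conj_mul_ne_zero hρ hwR
  have hwb : Metric.ball 0 R ∈ 𝓝 w := Metric.isOpen_ball.mem_nhds (by simpa using hw.trans_lt hr)
  have hds : DifferentiableAt ℂ (dslope f ρ) w :=
    (diffContOnCl_dslope hf (Metric.isOpen_ball.mem_nhds
      (mem_ball_zero_iff.mpr hρ))).differentiableOn.differentiableAt hwb
  have hfactor : f = fun z => (z - ρ) * dslope f ρ z :=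
    funext fun z => (sub_mul_dslope hfρ z).symm
  obtain ⟨hwρ, hdw⟩ := mul_ne_zero_iff.mp ((sub_mul_dslope hfρ w).symm ▸ hfw)
  have hlin : logDeriv (fun z : ℂ => (R ^ 2 - conj ρ * z) / R) w =
      -(conj ρ / (R ^ 2 - conj ρ * w)) := by
    rw [logDeriv_apply]
    simp [neg_div, div_div_div_cancel_right₀ hR']
  have hlogf : logDeriv f w = (w - ρ)⁻¹ + logDeriv (dslope f ρ) w := by
    conv_lhs => rw [hfactor]
    rw [logDeriv_mul w hwρ hdw (by fun_prop) hds, logDeriv_apply (fun z => z - ρ)]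
    simp
  have hlogq : logDeriv (blaschkeQuotient R ρ f) w = logDeriv (dslope f ρ) w +
      -(conj ρ / (R ^ 2 - conj ρ * w)) := by
    rw [← hlin]
    exact logDeriv_mul w hdw (div_ne_zero hne hR') hds (by fun_prop)
  rw [hlogf, hlogq, add_sub_cancel_left, sub_add_cancel_left, neg_neg, norm_div, RCLike.norm_conj,
    inv_eq_one_div, div_le_div_iff₀ (norm_pos_iff.mpr hne) (by linarith), one_mul]
  have htri := norm_sub_norm_le (R ^ 2 : ℂ) (conj ρ * w)
  rw [norm_mul, RCLike.norm_conj, norm_pow, norm_real, Real.norm_of_nonneg hR.le] at htri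
  nlinarith [norm_nonneg ρ, norm_nonneg w]

/-- The constant in Landau's local approximation of `f'/f` by the zeros of `f`, for the radii
`r < r₁ < R`: approximation on the disc of radius `r`, zeros taken from that of radius `r₁`, and
growth of `f` controlled on that of radius `R`. -/
def landauConst (r r₁ R : ℝ) : ℝ :=
  (R - r)⁻¹ / Real.log (R / r₁) + 4 * (r₁ + r) / (r₁ - r) ^ 2

lemma nonneg_of_norm_le_mul_exp {A : ℝ} (hR : 0 ≤ R) (hf0 : f 0 ≠ 0)
    (hfA : ∀ z ∈ Metric.closedBall 0 R, ‖f z‖ ≤ ‖f 0‖ * Real.exp A) : 0 ≤ A :=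
  Real.one_le_exp_iff.mp <| (le_mul_iff_one_le_right (norm_pos_iff.mpr hf0)).mp <|
    hfA 0 (Metric.mem_closedBall_self hR)

lemma norm_blaschkeQuotient_le_exp (hf : DiffContOnCl ℂ f (Metric.ball 0 R)) {r₁ A : ℝ}
    (hr₁ : r₁ < R) (hρ : ‖ρ‖ ≤ r₁) (hρ0 : ρ ≠ 0) (hfρ : f ρ = 0)
    (hfA : ∀ z ∈ Metric.closedBall 0 R, ‖f z‖ ≤ ‖f 0‖ * Real.exp A) :
    ∀ z ∈ Metric.closedBall 0 R, ‖blaschkeQuotient R ρ f z‖ ≤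
      ‖blaschkeQuotient R ρ f 0‖ * Real.exp (A - Real.log (R / r₁)) := fun z hz => by
  have hr₁0 : 0 < r₁ := (norm_pos_iff.mpr hρ0).trans_le hρ
  have hR : 0 < R := hr₁0.trans hr₁
  refine (norm_blaschkeQuotient_le hf (hρ.trans_lt hr₁) hfρ hfA z hz).trans ?_
  rw [Real.exp_sub, Real.exp_log (by positivity), div_div_eq_mul_div, mul_div_assoc',
    le_div_iff₀ hR]
  have h0 := norm_mul_norm_blaschkeQuotient_zero (hρ.trans_lt hr₁) hfρ
  calc ‖f 0‖ * Real.exp A * R = ‖ρ‖ * ‖blaschkeQuotient R ρ f 0‖ * Real.exp A := by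
        rw [h0]; ring
    _ ≤ r₁ * ‖blaschkeQuotient R ρ f 0‖ * Real.exp A := by gcongr
    _ = ‖blaschkeQuotient R ρ f 0‖ * (Real.exp A * r₁) := by ring

/-- Landau's local approximation of `f'/f` near `c`: `ρs` is a multiset of zeros of `f` in the disc
of radius `r₁`, whose number is controlled by `A`, and `f'/f` differs from `∑ 1/(w - ρ)` by `O(A)`
on the disc of radius `r`. The radius `R` enters through the constants. -/
structure IsLandauApprox (f : ℂ → ℂ) (c : ℂ) (r r₁ R A : ℝ) (ρs : Multiset ℂ) : Prop where
  zeros : ∀ ρ ∈ ρs, f ρ = 0 ∧ ‖ρ - c‖ ≤ r₁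
  card_le : ρs.card * Real.log (R / r₁) ≤ A
  norm_sub_le : ∀ w, ‖w - c‖ ≤ r → f w ≠ 0 →
    ‖logDeriv f w - (ρs.map fun ρ => (w - ρ)⁻¹).sum‖ ≤ landauConst r r₁ R * A

variable {r r₁ A : ℝ}

lemma isLandauApprox_zero (hr : r < r₁) (hr₁0 : 0 < r₁) (hr₁ : r₁ < R)
    (hf : DiffContOnCl ℂ f (Metric.ball 0 R)) (hf0 : ∀ z, ‖z‖ ≤ r₁ → f z ≠ 0)
    (hfA : ∀ z ∈ Metric.closedBall 0 R, ‖f z‖ ≤ ‖f 0‖ * Real.exp A) (hA : 0 ≤ A) :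
    IsLandauApprox f 0 r r₁ R A 0 where
  zeros := by simp
  card_le := by simpa using hA
  norm_sub_le w hw _ := by
    rw [Multiset.map_zero, Multiset.sum_zero, sub_zero, landauConst, add_mul]
    rw [sub_zero] at hw
    have hlog : 0 < Real.log (R / r₁) := Real.log_pos ((one_lt_div hr₁0).mpr hr₁)
    have hRr : 0 < R - r := by linarith
    refine (norm_logDeriv_le_of_ne_zero hr
      (hf.differentiableOn.mono (Metric.ball_subset_ball hr₁.le))
      (fun z hz => hf0 z (mem_ball_zero_iff.mp hz).le)
      (fun z hz => hfA z (Metric.ball_subset_closedBall (Metric.ball_subset_ball hr₁.le hz)))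
      hw).trans (le_add_of_nonneg_left (by positivity))

lemma isLandauApprox_cons (hr : r < r₁) (hr₁ : r₁ < R) (hf : DiffContOnCl ℂ f (Metric.ball 0 R))
    (hρ : ‖ρ‖ ≤ r₁) (hfρ : f ρ = 0) {ρs : Multiset ℂ}
    (h : IsLandauApprox (blaschkeQuotient R ρ f) 0 r r₁ R (A - Real.log (R / r₁)) ρs) :
    IsLandauApprox f 0 r r₁ R A (ρ ::ₘ ρs) where
  zeros := by
    refine Multiset.forall_mem_cons.mpr ⟨⟨hfρ, by simpa using hρ⟩, fun ρ' hρ' => ?_⟩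
    obtain ⟨hzero, hle⟩ := h.zeros ρ' hρ'
    refine ⟨?_, hle⟩
    rw [sub_zero] at hle
    rw [eq_mul_blaschkeQuotient (hρ.trans_lt hr₁) hfρ (hle.trans hr₁.le), hzero, mul_zero]
  card_le := by
    have hcard := h.card_le
    rw [Multiset.card_cons, Nat.cast_succ]
    linarith
  norm_sub_le w hw hfw := by
    have hwr : ‖w‖ ≤ r := by simpa using hw
    have hr₁0 : 0 < r₁ := (norm_nonneg w).trans_lt (hwr.trans_lt hr)
    have hlog : 0 < Real.log (R / r₁) := Real.log_pos ((one_lt_div hr₁0).mpr hr₁)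
    have hgw : blaschkeQuotient R ρ f w ≠ 0 := right_ne_zero_of_mul <|
      eq_mul_blaschkeQuotient (hρ.trans_lt hr₁) hfρ (hwr.trans (hr.trans hr₁).le) ▸ hfw
    have hconst : (R - r)⁻¹ ≤ landauConst r r₁ R * Real.log (R / r₁) := by
      rw [landauConst, add_mul, div_mul_cancel₀ _ hlog.ne']
      have hr0 : 0 ≤ r := (norm_nonneg w).trans hwr
      exact le_add_of_nonneg_right (by positivity)
    rw [Multiset.map_cons, Multiset.sum_cons, ← sub_sub,
      ← sub_add_sub_cancel _ (logDeriv (blaschkeQuotient R ρ f) w)]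
    calc _ ≤ (R - r)⁻¹ + landauConst r r₁ R * (A - Real.log (R / r₁)) :=
          norm_add_le_of_le (norm_logDeriv_sub_logDeriv_blaschkeQuotient_le hf (hρ.trans_lt hr₁)
            hfρ (hr.trans hr₁) hwr hfw) (h.norm_sub_le w hw hgw)
      _ ≤ landauConst r r₁ R * A := by linarith

-- Each division by a Blaschke factor lowers `A` by `log (R / r₁)`, while `A` stays nonnegative.
lemma exists_isLandauApprox_zero (hr : r < r₁) (hr₁0 : 0 < r₁) (hr₁ : r₁ < R)
    (hf : DiffContOnCl ℂ f (Metric.ball 0 R)) (hf0 : f 0 ≠ 0)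
    (hfA : ∀ z ∈ Metric.closedBall 0 R, ‖f z‖ ≤ ‖f 0‖ * Real.exp A) :
    ∃ ρs, IsLandauApprox f 0 r r₁ R A ρs := by
  have hlog : 0 < Real.log (R / r₁) := Real.log_pos ((one_lt_div hr₁0).mpr hr₁)
  obtain ⟨n, hn⟩ := exists_nat_gt (A / Real.log (R / r₁))
  rw [div_lt_iff₀ hlog] at hn
  induction n generalizing f A with
  | zero =>
    rw [Nat.cast_zero, zero_mul] at hn
    exact absurd (nonneg_of_norm_le_mul_exp (hr₁0.trans hr₁).le hf0 hfA) hn.not_ge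
  | succ n ih =>
    have hA := nonneg_of_norm_le_mul_exp (hr₁0.trans hr₁).le hf0 hfA
    by_cases! hz : ∃ ρ, ‖ρ‖ ≤ r₁ ∧ f ρ = 0
    · obtain ⟨ρ, hρ, hfρ⟩ := hz
      have hρR := hρ.trans_lt hr₁
      have hg0 : blaschkeQuotient R ρ f 0 ≠ 0 := right_ne_zero_of_mul <|
        eq_mul_blaschkeQuotient hρR hfρ (z := 0) (by simpa using (hr₁0.trans hr₁).le) ▸ hf0
      obtain ⟨ρs, hρs⟩ := ih (diffContOnCl_blaschkeQuotient hf hρR) hg0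
        (norm_blaschkeQuotient_le_exp hf hr₁ hρ (fun h => hf0 (h ▸ hfρ)) hfρ hfA)
        (by push_cast at hn; linarith)
      exact ⟨ρ ::ₘ ρs, isLandauApprox_cons hr hr₁ hf hρ hfρ hρs⟩
    · exact ⟨0, isLandauApprox_zero hr hr₁0 hr₁ hf hz hfA hA⟩

theorem exists_isLandauApprox {c : ℂ} (hr : r < r₁) (hr₁0 : 0 < r₁) (hr₁ : r₁ < R)
    (hf : DiffContOnCl ℂ f (Metric.ball c R)) (hfc : f c ≠ 0)
    (hfA : ∀ z ∈ Metric.closedBall c R, ‖f z‖ ≤ ‖f c‖ * Real.exp A) :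
    ∃ ρs, IsLandauApprox f c r r₁ R A ρs := by
  have hmaps : Set.MapsTo (c + ·) (Metric.ball 0 R) (Metric.ball c R) := fun z hz => by
    simpa using hz
  obtain ⟨ρs, hρs⟩ := exists_isLandauApprox_zero (f := fun z => f (c + z)) (A := A) hr hr₁0 hr₁
    (hf.comp (Differentiable.diffContOnCl (by fun_prop)) hmaps) (by simpa using hfc)
    (fun z hz => by simpa using hfA (c + z) (by simpa using hz))
  refine ⟨ρs.map (c + ·), ⟨?_, by simpa using hρs.card_le, fun w hw hfw => ?_⟩⟩
  · simpa using hρs.zeros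
  · have h := hρs.norm_sub_le (w - c) (by simpa using hw) (by simpa using hfw)
    simpa [logDeriv_apply, deriv_comp_const_add, sub_sub, Function.comp_def] using h

end Landau

section MellinTransform

variable {A : ℝ → ℂ} {K : ℝ}

lemma differentiableOn_integral_mul_cpow (hA : Measurable A) (hK : ∀ t, 1 < t → ‖A t‖ ≤ K) :
    DifferentiableOn ℂ (fun s : ℂ => ∫ t in Set.Ioi (1 : ℝ), A t * (t : ℂ) ^ (-(s + 1)))
      {s | 0 < s.re} := by
  let B := Set.indicator (Set.Ioi 1) A
  have hBm : Measurable B := hA.indicator measurableSet_Ioi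
  have hBK (t : ℝ) : ‖B t‖ ≤ K := by
    by_cases ht : t ∈ Set.Ioi (1 : ℝ)
    · simpa only [B, Set.indicator_of_mem ht] using hK t ht
    · simpa only [B, Set.indicator_of_notMem ht, norm_zero] using
        (norm_nonneg _).trans (hK 2 one_lt_two)
  have hmellin (s : ℂ) :
      ∫ t in Set.Ioi (1 : ℝ), A t * (t : ℂ) ^ (-(s + 1)) = mellin B (-s) := by
    have hB (t : ℝ) : (t : ℂ) ^ (-s - 1) • B t =
        (Set.Ioi (1 : ℝ)).indicator (fun t : ℝ => A t * (t : ℂ) ^ (-(s + 1))) t := by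
      rw [neg_add', smul_eq_mul, mul_comm, Set.indicator_mul_left]
    simp_rw [mellin, hB]
    rw [setIntegral_indicator measurableSet_Ioi,
      Set.inter_eq_right.mpr (Set.Ioi_subset_Ioi zero_le_one)]
  have hlocal : LocallyIntegrable B := fun x => ⟨Set.Icc (x - 1) (x + 1),
    Icc_mem_nhds (by linarith) (by linarith),
    Measure.integrableOn_of_bounded (M := K) (by simp) hBm.aestronglyMeasurable (.of_forall hBK)⟩
  have htop : B =O[atTop] fun t : ℝ => t ^ (-0 : ℝ) :=
    .of_bound K (.of_forall fun t => by simpa using hBK t)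
  simp_rw [hmellin]
  intro s hs
  have hbot : B =O[𝓝[>] 0] fun t : ℝ => t ^ (-((-s).re - 1)) := by
    refine .of_bound 1 ?_
    filter_upwards [Ioo_mem_nhdsGT zero_lt_one] with t ht
    simp [B, ht.2.le]
  have hd : DifferentiableAt ℂ (mellin B) (-s) :=
    mellin_differentiableAt_of_isBigO_rpow (hlocal.locallyIntegrableOn _) htop (by simpa using hs)
      hbot (by linarith)
  exact (hd.comp s (f := fun s => -s) (by fun_prop)).differentiableWithinAt

lemma norm_mul_cpow_le (hK : ∀ t, 1 < t → ‖A t‖ ≤ K) (s : ℂ) {t : ℝ} (ht : 1 < t) :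
    ‖A t * (t : ℂ) ^ (-(s + 1))‖ ≤ K * t ^ (-(s.re + 1)) := by
  rw [norm_mul, norm_cpow_eq_rpow_re_of_pos (zero_lt_one.trans ht)]
  simp only [neg_re, add_re, one_re]
  have := hK t ht
  gcongr

lemma integrableOn_mul_cpow (hA : Measurable A) (hK : ∀ t, 1 < t → ‖A t‖ ≤ K) {s : ℂ}
    (hs : 0 < s.re) : IntegrableOn (fun t : ℝ => A t * (t : ℂ) ^ (-(s + 1))) (Set.Ioi 1) := by
  have hinteg : IntegrableOn (fun t : ℝ => K * t ^ (-(s.re + 1))) (Set.Ioi 1) :=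
    (integrableOn_Ioi_rpow_of_lt (by linarith) zero_lt_one).const_mul K
  refine hinteg.mono'
    (hA.aestronglyMeasurable.mul (ContinuousOn.aestronglyMeasurable (fun t ht => ?_)
      measurableSet_Ioi)) ?_
  · exact (continuousAt_ofReal_cpow_const _ _
      (.inr (zero_lt_one.trans ht).ne')).continuousWithinAt
  · filter_upwards [ae_restrict_mem measurableSet_Ioi] with t ht
    exact norm_mul_cpow_le hK s ht

lemma norm_integral_mul_cpow_le (hK : ∀ t, 1 < t → ‖A t‖ ≤ K) {s : ℂ} (hs : 0 < s.re) :
    ‖∫ t in Set.Ioi (1 : ℝ), A t * (t : ℂ) ^ (-(s + 1))‖ ≤ K / s.re := by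
  refine (norm_integral_le_of_norm_le
    ((integrableOn_Ioi_rpow_of_lt (by linarith) zero_lt_one).const_mul K)
    ((ae_restrict_mem measurableSet_Ioi).mono fun t ht => norm_mul_cpow_le hK s ht)).trans_eq ?_
  rw [integral_const_mul, integral_Ioi_rpow_of_lt (by linarith) zero_lt_one]
  simp [div_eq_mul_inv]

end MellinTransform

section Growth

variable {a : ℕ → ℂ} {e : ℂ} {K : ℝ}

/-- The error term `∑_{k ≤ t} a k - e t` in the approximation of partial sums by a linear
function. -/
def partialSumError (a : ℕ → ℂ) (e : ℂ) (t : ℝ) : ℂ := ∑ k ∈ Icc 1 ⌊t⌋₊, a k - e * t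

lemma measurable_partialSumError (a : ℕ → ℂ) (e : ℂ) : Measurable (partialSumError a e) := by
  have h : Measurable fun n : ℕ => ∑ k ∈ Icc 1 n, a k := measurable_from_top
  exact (h.comp Nat.measurable_floor).sub (measurable_ofReal.const_mul e)

lemma LSeries_eq_of_norm_partialSumError_le
    (hK : ∀ t, 1 < t → ‖partialSumError a e t‖ ≤ K) {s : ℂ} (hs : 1 < s.re)
    (hsum : LSeriesSummable a s) :
    LSeries a s = e * (s / (s - 1)) +
      s * ∫ t in Set.Ioi (1 : ℝ), partialSumError a e t * (t : ℂ) ^ (-(s + 1)) := by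
  have hs1 : s - 1 ≠ 0 := fun h => by simp [sub_eq_zero.mp h] at hs
  have hO : (fun n : ℕ => ∑ k ∈ Icc 1 n, a k) =O[atTop] fun n : ℕ => (n : ℝ) ^ (1 : ℝ) := by
    refine .of_bound (K + ‖e‖) ((eventually_gt_atTop 1).mono fun n hn => ?_)
    have hn' : (1 : ℝ) < n := by exact_mod_cast hn
    have h := hK n hn'
    have hsplit : ∑ k ∈ Icc 1 n, a k = partialSumError a e n + e * n := by
      simp [partialSumError]
    rw [hsplit, Real.rpow_one, Real.norm_natCast, add_mul]
    refine norm_add_le_of_le (h.trans ?_) (by simp)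
    exact le_mul_of_one_le_right ((norm_nonneg _).trans h) hn'.le
  have hlin : IntegrableOn (fun t : ℝ => e * (t : ℂ) ^ (-s)) (Set.Ioi 1) :=
    (integrableOn_Ioi_cpow_of_lt (by simpa using hs) zero_lt_one).const_mul e
  have hsum' : ∫ t in Set.Ioi (1 : ℝ), (∑ k ∈ Icc 1 ⌊t⌋₊, a k) * (t : ℂ) ^ (-(s + 1)) =
      (∫ t in Set.Ioi (1 : ℝ), partialSumError a e t * (t : ℂ) ^ (-(s + 1))) +
        ∫ t in Set.Ioi (1 : ℝ), e * (t : ℂ) ^ (-s) := by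
    rw [← integral_add (integrableOn_mul_cpow (measurable_partialSumError a e) hK
      (by linarith)) hlin]
    refine setIntegral_congr_fun measurableSet_Ioi fun t ht => ?_
    have ht0 : (t : ℂ) ≠ 0 := ofReal_ne_zero.mpr (zero_lt_one.trans ht).ne'
    have hpow : (t : ℂ) ^ (-s) = t * (t : ℂ) ^ (-(s + 1)) := by
      rw [show -s = 1 + -(s + 1) by ring, cpow_add _ _ ht0, cpow_one]
    simp only [hpow, partialSumError]
    ring
  rw [LSeries_eq_mul_integral a zero_le_one hs hsum hO, hsum', integral_const_mul,
    integral_Ioi_cpow_of_lt (by simpa using hs) zero_lt_one, ofReal_one, one_cpow,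
    show -s + 1 = -(s - 1) by ring]
  field_simp
  ring

lemma eqOn_re_pos_of_eqOn_one_lt_re {f g : ℂ → ℂ} (hf : DifferentiableOn ℂ f {s | 0 < s.re})
    (hg : DifferentiableOn ℂ g {s | 0 < s.re}) (h : ∀ s : ℂ, 1 < s.re → f s = g s) :
    Set.EqOn f g {s | 0 < s.re} := by
  refine (hf.analyticOnNhd (isOpen_lt continuous_const continuous_re))
    |>.eqOn_of_preconnected_of_eventuallyEq
      (hg.analyticOnNhd (isOpen_lt continuous_const continuous_re))
      (convex_halfSpace_re_gt 0).isPreconnected (z₀ := 2) (by simp) ?_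
  filter_upwards [(isOpen_lt continuous_const continuous_re).mem_nhds
    (show (1 : ℝ) < (2 : ℂ).re by simp)] with s hs using h s hs

variable {M : ℕ} [NeZero M] {Φ : ZMod M → ℂ}

/-- The mean value of a function on `ZMod M`. -/
def meanValue (Φ : ZMod M → ℂ) : ℂ := (∑ x, Φ x) / M

lemma sum_range_natCast_add_one (Φ : ZMod M → ℂ) :
    ∑ k ∈ range M, Φ ((k + 1 : ℕ) : ZMod M) = ∑ x, Φ x := by
  have hshift : ∑ x, Φ x = ∑ x : ZMod M, Φ (x + 1) :=
    (Equiv.sum_comp (Equiv.addRight (1 : ZMod M)) Φ).symm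
  rw [hshift]
  refine sum_bij' (fun k _ => (k : ZMod M)) (fun x _ => x.val) (by simp)
    (fun x _ => mem_range.mpr x.val_lt) (fun k hk => ?_) (by simp) (by simp)
  exact ZMod.val_cast_of_lt (mem_range.mp hk)

lemma norm_meanValue_le (hΦ : ∀ x, ‖Φ x‖ ≤ 1) : ‖meanValue Φ‖ ≤ 1 := by
  have hM : (0 : ℝ) < M := by exact_mod_cast NeZero.pos M
  rw [meanValue, norm_div, Complex.norm_natCast, div_le_one hM]
  exact (norm_sum_le_of_le _ fun x _ => hΦ x).trans (by simp)

lemma norm_sum_range_sub_le (hΦ : ∀ x, ‖Φ x‖ ≤ 1) (n : ℕ) :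
    ‖∑ k ∈ range n, Φ ((k + 1 : ℕ) : ZMod M) - n * meanValue Φ‖ ≤ 2 * M := by
  have hperiodic : Function.Periodic
      (fun n : ℕ => ∑ k ∈ range n, Φ ((k + 1 : ℕ) : ZMod M) - n * meanValue Φ) M := fun n => by
    have hblock : M * meanValue Φ = ∑ x, Φ x := mul_div_cancel₀ _ (NeZero.ne _)
    have hshift (k : ℕ) : Φ ((M + k + 1 : ℕ) : ZMod M) = Φ ((k + 1 : ℕ) : ZMod M) := by simp
    simp only [add_comm n M]
    rw [sum_range_add, sum_range_natCast_add_one Φ, Nat.cast_add, add_mul, hblock,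
      add_sub_add_left_eq_sub]
    simp only [hshift]
  rw [← hperiodic.map_mod_nat n, two_mul]
  have hle : ((n % M : ℕ) : ℝ) ≤ M := by exact_mod_cast (Nat.mod_lt n (NeZero.pos M)).le
  refine norm_sub_le_of_le ((norm_sum_le_of_le _ fun k _ => hΦ _).trans (by simpa using hle)) ?_
  rw [norm_mul, Complex.norm_natCast]
  exact (mul_le_of_le_one_right (by positivity) (norm_meanValue_le hΦ)).trans hle

lemma norm_partialSumError_le (hΦ : ∀ x, ‖Φ x‖ ≤ 1) {t : ℝ} (ht : 0 ≤ t) :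
    ‖partialSumError (fun n => Φ n) (meanValue Φ) t‖ ≤ 3 * M := by
  have hM : (1 : ℝ) ≤ M := by exact_mod_cast NeZero.one_le
  have hfract : ‖meanValue Φ * ((⌊t⌋₊ : ℂ) - t)‖ ≤ 1 := by
    have habs : |(⌊t⌋₊ : ℝ) - t| ≤ 1 := by
      rw [abs_sub_comm, abs_le]
      constructor <;> linarith [Nat.floor_le ht, Nat.lt_floor_add_one t]
    rw [norm_mul, ← ofReal_natCast, ← ofReal_sub, norm_real]
    exact mul_le_one₀ (norm_meanValue_le hΦ) (norm_nonneg _) habs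
  have hsum : ∑ k ∈ Icc 1 ⌊t⌋₊, Φ k = ∑ k ∈ range ⌊t⌋₊, Φ ((k + 1 : ℕ) : ZMod M) := by
    rw [range_eq_Ico, sum_Ico_add' (fun k : ℕ => Φ k), zero_add, Ico_add_one_right_eq_Icc]
  have hsplit : partialSumError (fun n => Φ n) (meanValue Φ) t =
      (∑ k ∈ range ⌊t⌋₊, Φ ((k + 1 : ℕ) : ZMod M) - ⌊t⌋₊ * meanValue Φ) +
        meanValue Φ * (⌊t⌋₊ - t) := by
    rw [partialSumError, hsum]
    ring
  rw [hsplit]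
  linarith [norm_add_le_of_le (norm_sum_range_sub_le hΦ ⌊t⌋₊) hfract]

end Growth

section RegularizedLFunction

variable {M : ℕ} [NeZero M] (χ : DirichletCharacter ℂ M)

open Classical in
/-- The order of the pole of `L(s, χ)` at `s = 1`. -/
def poleOrder : ℕ := if χ = 1 then 1 else 0

lemma poleOrder_le_one : poleOrder χ ≤ 1 := by
  unfold poleOrder
  split_ifs <;> decide

open Classical in
/-- The entire function `(s - 1) ^ poleOrder χ * L(s, χ)`, with its limit value at `s = 1`. -/
def regularizedLFunction : ℂ → ℂ := if χ = 1 then LFunctionTrivChar₁ M else LFunction χ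

lemma differentiable_regularizedLFunction : Differentiable ℂ (regularizedLFunction χ) := by
  by_cases h : χ = 1
  · rw [regularizedLFunction, if_pos h]
    exact differentiable_LFunctionTrivChar₁ M
  · rw [regularizedLFunction, if_neg h]
    exact differentiable_LFunction h

variable {χ} {s : ℂ}

lemma regularizedLFunction_of_ne_one (hs : s ≠ 1) :
    regularizedLFunction χ s = (s - 1) ^ poleOrder χ * LFunction χ s := by
  by_cases h : χ = 1
  · rw [regularizedLFunction, poleOrder, if_pos h, if_pos h, LFunctionTrivChar₁,
      Function.update_of_ne hs, pow_one, h]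
  · rw [regularizedLFunction, poleOrder, if_neg h, if_neg h, pow_zero, one_mul]

lemma logDeriv_regularizedLFunction (hs : s ≠ 1) (hL : LFunction χ s ≠ 0) :
    logDeriv (regularizedLFunction χ) s =
      logDeriv (LFunction χ) s + poleOrder χ / (s - 1) := by
  have hev : regularizedLFunction χ =ᶠ[𝓝 s]
      fun z => (z - 1) ^ poleOrder χ * LFunction χ z := by
    filter_upwards [isOpen_ne.mem_nhds hs] with z hz using regularizedLFunction_of_ne_one hz
  have hs1 : s - 1 ≠ 0 := sub_ne_zero.mpr hs
  rw [(logDeriv_congr_nhds hev).eq_of_nhds,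
    logDeriv_mul (f := fun z => (z - 1) ^ poleOrder χ) s (pow_ne_zero _ hs1) hL (by fun_prop)
      (differentiableAt_LFunction χ s (.inl hs)), logDeriv_fun_pow (by fun_prop), add_comm]
  simp [logDeriv_apply, div_eq_mul_inv]

lemma regularizedLFunction_ne_zero_of_one_le_re (hs : 1 ≤ s.re) :
    regularizedLFunction χ s ≠ 0 := by
  by_cases h : χ = 1 ∧ s = 1
  · rw [regularizedLFunction, if_pos h.1, h.2]
    exact LFunctionTrivChar₁_apply_one_ne_zero M
  · have hL : LFunction χ s ≠ 0 := LFunction_ne_zero_of_one_le_re χ (not_and_or.mp h) hs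
    by_cases hs1 : s = 1
    · rwa [regularizedLFunction, if_neg fun hχ => h ⟨hχ, hs1⟩]
    · rw [regularizedLFunction_of_ne_one hs1]
      exact mul_ne_zero (pow_ne_zero _ (sub_ne_zero.mpr hs1)) hL

lemma re_eq_of_regularizedLFunction_eq_zero (hχ : GRHchar χ) (hs : 0 < s.re)
    (h : regularizedLFunction χ s = 0) : s.re = 1 / 2 := by
  have hs1 : s.re < 1 := by
    by_contra! hle
    exact regularizedLFunction_ne_zero_of_one_le_re hle h
  have hne : s ≠ 1 := fun h => by simp [h] at hs1
  rw [regularizedLFunction_of_ne_one hne] at h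
  exact hχ s hs hs1 ((mul_eq_zero.mp h).resolve_left (pow_ne_zero _ (sub_ne_zero.mpr hne)))

lemma regularizedLFunction_eq_integral (hs : 0 < s.re) :
    regularizedLFunction χ s = meanValue χ * s + (s - 1) ^ poleOrder χ * (s *
      ∫ t in Set.Ioi (1 : ℝ), partialSumError (fun n => χ n) (meanValue χ) t *
        (t : ℂ) ^ (-(s + 1))) := by
  have hbound (t : ℝ) (ht : 1 < t) :=
    norm_partialSumError_le χ.norm_le_one (zero_le_one.trans ht.le)
  refine eqOn_re_pos_of_eqOn_one_lt_re
    (g := fun s => meanValue χ * s + (s - 1) ^ poleOrder χ * (s *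
      ∫ t in Set.Ioi (1 : ℝ), partialSumError (fun n => χ n) (meanValue χ) t *
        (t : ℂ) ^ (-(s + 1)))) (differentiable_regularizedLFunction χ).differentiableOn
    (.add (by fun_prop) (.mul (by fun_prop) (.mul (by fun_prop)
      (differentiableOn_integral_mul_cpow (measurable_partialSumError _ _) hbound))))
    (fun s hs => ?_) hs
  have hs1 : s ≠ 1 := fun h => by simp [h] at hs
  rw [regularizedLFunction_of_ne_one hs1, LFunction_eq_LSeries χ hs,
    LSeries_eq_of_norm_partialSumError_le hbound hs (LSeriesSummable_of_one_lt_re χ hs), mul_add]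
  congr 1
  by_cases h : χ = 1
  · rw [poleOrder, if_pos h, pow_one]
    field_simp [sub_ne_zero.mpr hs1]
  · simp [meanValue, MulChar.sum_eq_zero_of_ne_one h]

lemma norm_sub_one_pow_poleOrder_le (s : ℂ) : ‖(s - 1) ^ poleOrder χ‖ ≤ 1 + ‖s‖ := by
  by_cases h : χ = 1
  · simpa [poleOrder, h, add_comm] using norm_sub_le s 1
  · simp [poleOrder, h]

lemma norm_regularizedLFunction_le (hs : 1 / 10 ≤ s.re) :
    ‖regularizedLFunction χ s‖ ≤ 30 * M * (1 + ‖s‖) ^ 2 := by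
  have hs0 : 0 < s.re := by linarith
  have hM : (1 : ℝ) ≤ M := by exact_mod_cast NeZero.one_le
  have hbound (t : ℝ) (ht : 1 < t) :=
    norm_partialSumError_le χ.norm_le_one (zero_le_one.trans ht.le)
  have hinteg : ‖∫ t in Set.Ioi (1 : ℝ), partialSumError (fun n => χ n) (meanValue χ) t *
      (t : ℂ) ^ (-(s + 1))‖ ≤ 30 * M := by
    refine (norm_integral_mul_cpow_le hbound hs0).trans ((div_le_iff₀ hs0).mpr ?_)
    nlinarith
  rw [regularizedLFunction_eq_integral hs0]
  calc _ ≤ 1 * ‖s‖ + (1 + ‖s‖) * (‖s‖ * (30 * M)) := by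
        refine (norm_add_le _ _).trans ?_
        rw [norm_mul, norm_mul, norm_mul]
        gcongr
        · exact norm_meanValue_le χ.norm_le_one
        · exact norm_sub_one_pow_poleOrder_le s
    _ ≤ 30 * M * (1 + ‖s‖) ^ 2 := by nlinarith [norm_nonneg s]

lemma norm_LFunction_sub_one_le (hs : 2 ≤ s.re) : ‖LFunction χ s - 1‖ ≤ Real.pi ^ 2 / 6 - 1 := by
  have hs1 : 1 < s.re := by linarith
  rw [LFunction_eq_LSeries χ hs1]
  refine ((LSeriesSummable_of_one_lt_re χ hs1).hasSum.sub (hasSum_ite_eq 1 1)).norm_le_of_bounded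
    (hasSum_zeta_two.sub (hasSum_ite_eq 1 1)) fun n => ?_
  rcases eq_or_ne n 1 with rfl | hn1
  · simp
  rw [if_neg hn1, if_neg hn1, sub_zero, sub_zero]
  rcases eq_or_ne n 0 with rfl | hn0
  · simp
  have hn : (1 : ℝ) ≤ n := by exact_mod_cast Nat.one_le_iff_ne_zero.mpr hn0
  rw [LSeries.term_of_ne_zero hn0, norm_div, norm_natCast_cpow_of_pos (Nat.pos_of_ne_zero hn0)]
  refine div_le_div₀ zero_le_one (χ.norm_le_one _) (by positivity) ?_
  rw [← Real.rpow_natCast]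
  exact Real.rpow_le_rpow_of_exponent_le hn (by exact_mod_cast hs)

lemma one_quarter_le_norm_regularizedLFunction (hs : 2 ≤ s.re) :
    1 / 4 ≤ ‖regularizedLFunction χ s‖ := by
  have hs1 : s ≠ 1 := fun h => by norm_num [h] at hs
  have hL : 1 / 4 ≤ ‖LFunction χ s‖ := by
    have h := norm_sub_norm_le (1 : ℂ) (LFunction χ s)
    rw [norm_one, norm_sub_rev] at h
    have h' := norm_LFunction_sub_one_le (χ := χ) hs
    nlinarith [Real.pi_lt_d2, Real.pi_pos]
  have hpole : 1 ≤ ‖s - 1‖ := by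
    refine le_trans ?_ (re_le_norm _)
    rw [sub_re, one_re]
    linarith
  rw [regularizedLFunction_of_ne_one hs1, norm_mul, norm_pow]
  exact hL.trans (le_mul_of_one_le_left (norm_nonneg _) (one_le_pow₀ hpole))

end RegularizedLFunction

section DirichletPolynomial

/-- The Dirichlet polynomial `∑_{m ≤ Y} a(m) m⁻ᶻ`. -/
def dirichletPoly (a : ℕ → ℂ) (Y : ℝ) (z : ℂ) : ℂ := ∑ m ∈ Icc 1 ⌊Y⌋₊, a m * (m : ℂ) ^ (-z)

lemma norm_term_le_rpow_mul_norm_term (a : ℕ → ℂ) {x : ℝ} {z : ℂ} (hx : x ≤ z.re) {Y : ℝ}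
    (hY : 0 < Y) {n : ℕ} (hn : Y ≤ n) :
    ‖LSeries.term a z n‖ ≤ Y ^ (x - z.re) * ‖LSeries.term a x n‖ := by
  have hn0 : (0 : ℝ) < n := hY.trans_le hn
  have hn0' : n ≠ 0 := by exact_mod_cast hn0.ne'
  rw [LSeries.norm_term_eq, LSeries.norm_term_eq, if_neg hn0', if_neg hn0', ofReal_re]
  calc ‖a n‖ / (n : ℝ) ^ z.re = (n : ℝ) ^ (x - z.re) * (‖a n‖ / (n : ℝ) ^ x) := by
        rw [Real.rpow_sub hn0]
        field_simp
    _ ≤ Y ^ (x - z.re) * (‖a n‖ / (n : ℝ) ^ x) :=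
        mul_le_mul_of_nonneg_right (Real.rpow_le_rpow_of_nonpos hY hn (sub_nonpos.mpr hx))
          (by positivity)

lemma norm_LSeries_sub_dirichletPoly_le {a b : ℕ → ℂ} {x : ℝ} {z : ℂ} (hab : ∀ n, ‖a n‖ ≤ ‖b n‖)
    (hb : LSeriesSummable b x) (hx : x ≤ z.re) {Y : ℝ} (hY : 0 < Y) :
    ‖LSeries a z - dirichletPoly a Y z‖ ≤ Y ^ (x - z.re) * ∑' n, ‖LSeries.term b x n‖ := by
  have hza : LSeriesSummable a z :=
    .of_re_le_re hx (.of_norm_bounded hb.norm fun n => LSeries.norm_term_le x (hab n))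
  have hpoly : dirichletPoly a Y z = ∑ m ∈ Icc 1 ⌊Y⌋₊, LSeries.term a z m :=
    sum_congr rfl fun m hm => by
      rw [LSeries.term_of_ne_zero (Nat.one_le_iff_ne_zero.mp (mem_Icc.mp hm).1), cpow_neg,
        div_eq_mul_inv]
  have hhead : HasSum (fun n => if n ∈ Icc 1 ⌊Y⌋₊ then LSeries.term a z n else 0)
      (dirichletPoly a Y z) := by
    rw [hpoly, ← sum_congr rfl fun n hn => if_pos hn]
    exact hasSum_sum_of_ne_finset_zero fun n hn => if_neg hn
  refine (hza.hasSum.sub hhead).norm_le_of_bounded (hb.norm.hasSum.mul_left _) fun n => ?_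
  by_cases hn : n ∈ Icc 1 ⌊Y⌋₊
  · rw [if_pos hn, sub_self, norm_zero]
    positivity
  · rw [if_neg hn, sub_zero]
    rcases eq_or_ne n 0 with rfl | hn0
    · simp
    have hYn : Y ≤ n := by
      rw [mem_Icc, not_and, not_le, Nat.floor_lt hY.le] at hn
      exact (hn (Nat.one_le_iff_ne_zero.mpr hn0)).le
    refine (norm_term_le_rpow_mul_norm_term a hx hY hYn).trans ?_
    gcongr
    exact LSeries.norm_term_le x (hab n)

lemma dirichletPoly_mul_cpow (a : ℕ → ℂ) {Y : ℝ} (hY : 0 ≤ Y) (s z : ℂ) :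
    dirichletPoly a Y z * (Y : ℂ) ^ (z - s) =
      ∑ m ∈ Icc 1 ⌊Y⌋₊, a m * (m : ℂ) ^ (-s) * ((Y / m : ℝ) : ℂ) ^ (z - s) := by
  rw [dirichletPoly, sum_mul]
  refine sum_congr rfl fun m hm => ?_
  have hm0 : (m : ℂ) ≠ 0 := by exact_mod_cast Nat.one_le_iff_ne_zero.mp (mem_Icc.mp hm).1
  have hsplit : (m : ℂ) ^ (-z) = (m : ℂ) ^ (-s) * ((m : ℂ) ^ (z - s))⁻¹ := by
    rw [← cpow_neg, ← cpow_add _ _ hm0]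
    congr 1
    ring
  rw [ofReal_div, ofReal_natCast, div_eq_mul_inv, ← ofReal_natCast, ← ofReal_inv,
    mul_cpow_ofReal_nonneg hY (by positivity), ofReal_inv, ofReal_natCast,
    inv_cpow _ _ (by rw [natCast_arg]; exact Real.pi_ne_zero.symm), hsplit]
  ring

lemma hasDerivAt_dirichletPoly_mul_cpow (a : ℕ → ℂ) {Y : ℝ} (hY : 0 < Y) (s z : ℂ) :
    HasDerivAt (fun z => dirichletPoly a Y z * (Y : ℂ) ^ (z - s))
      (∑ m ∈ Icc 1 ⌊Y⌋₊, a m * (m : ℂ) ^ (-s) *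
        (((Y / m : ℝ) : ℂ) ^ (z - s) * Real.log (Y / m))) z := by
  simp only [dirichletPoly_mul_cpow a hY.le]
  refine HasDerivAt.fun_sum fun m hm => ?_
  have hm0 : (0 : ℝ) < m := by exact_mod_cast (mem_Icc.mp hm).1
  have hYm : 0 < Y / m := by positivity
  have h := ((hasDerivAt_id z).sub_const s).const_cpow (c := ((Y / m : ℝ) : ℂ))
    (.inl (ofReal_ne_zero.mpr hYm.ne'))
  rw [mul_one, ← ofReal_log hYm.le] at h
  exact h.const_mul _

lemma exists_norm_dirichletPoly_mul_cpow_le (a : ℕ → ℂ) {Y : ℝ} (hY : 0 ≤ Y) (s : ℂ) (c : ℝ) :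
    ∃ K, ∀ z : ℂ, z.re ≤ c → ‖dirichletPoly a Y z * (Y : ℂ) ^ (z - s)‖ ≤ K := by
  refine ⟨∑ m ∈ Icc 1 ⌊Y⌋₊, ‖a m * (m : ℂ) ^ (-s)‖ * (Y / m) ^ (c - s.re), fun z hz => ?_⟩
  rw [dirichletPoly_mul_cpow a hY]
  refine norm_sum_le_of_le _ fun m hm => ?_
  have hm0 : (0 : ℝ) < m := by exact_mod_cast (mem_Icc.mp hm).1
  have hYm : 1 ≤ Y / m := (one_le_div hm0).mpr ((Nat.le_floor_iff hY).mp (mem_Icc.mp hm).2)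
  rw [norm_mul, norm_cpow_eq_rpow_re_of_pos (zero_lt_one.trans_le hYm), sub_re]
  gcongr

end DirichletPolynomial

section VonMangoldt

/-- The coefficients of the Dirichlet series of `-L'/L(s, χ)`. -/
def twistedVonMangoldt {M : ℕ} (χ : DirichletCharacter ℂ M) (n : ℕ) : ℂ :=
  ArithmeticFunction.vonMangoldt n * χ n

/-- The sum `∑ Λ(n) n⁻²`. -/
def vonMangoldtSum : ℝ :=
  ∑' n, ‖LSeries.term (fun n => (ArithmeticFunction.vonMangoldt n : ℂ)) ((2 : ℝ) : ℂ) n‖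

lemma vonMangoldtSum_nonneg : 0 ≤ vonMangoldtSum := tsum_nonneg fun _ => norm_nonneg _

variable {M : ℕ} [NeZero M] (χ : DirichletCharacter ℂ M) {z : ℂ}

lemma logDeriv_LFunction_eq_neg_LSeries (hz : 1 < z.re) :
    logDeriv (LFunction χ) z = -LSeries (twistedVonMangoldt χ) z := by
  have hcoeff : twistedVonMangoldt χ =
      (fun n : ℕ => χ n) * fun n => (ArithmeticFunction.vonMangoldt n : ℂ) :=
    funext fun n => mul_comm _ _
  rw [hcoeff, LSeries_twist_vonMangoldt_eq χ hz, logDeriv_apply,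
    deriv_LFunction_eq_deriv_LSeries χ hz, LFunction_eq_LSeries χ hz, neg_div, neg_neg]

lemma norm_logDeriv_LFunction_add_dirichletPoly_le (hz : 2 ≤ z.re) {Y : ℝ} (hY : 0 < Y) :
    ‖logDeriv (LFunction χ) z + dirichletPoly (twistedVonMangoldt χ) Y z‖ ≤
      Y ^ (2 - z.re) * vonMangoldtSum := by
  rw [logDeriv_LFunction_eq_neg_LSeries χ (by linarith), neg_add_eq_sub, norm_sub_rev]
  refine norm_LSeries_sub_dirichletPoly_le (fun n => ?_)
    (ArithmeticFunction.LSeriesSummable_vonMangoldt (by norm_num)) hz hY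
  rw [twistedVonMangoldt, norm_mul]
  exact mul_le_of_le_one_right (norm_nonneg _) (χ.norm_le_one _)

end VonMangoldt

section LogDerivBounds

lemma re_sum_inv_sub_nonneg {ρs : Multiset ℂ} {w : ℂ} (hρs : ∀ ρ ∈ ρs, ρ.re ≤ w.re) :
    0 ≤ (ρs.map fun ρ => (w - ρ)⁻¹).sum.re := by
  rw [← coe_reAddGroupHom, map_multiset_sum, Multiset.map_map]
  refine Multiset.sum_nonneg fun x hx => ?_
  obtain ⟨ρ, hρ, rfl⟩ := Multiset.mem_map.mp hx
  rw [Function.comp_apply, coe_reAddGroupHom, inv_re, sub_re]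
  exact div_nonneg (sub_nonneg.mpr (hρs ρ hρ)) (normSq_nonneg _)

lemma norm_sum_inv_sub_le {ρs : Multiset ℂ} {w : ℂ} {x : ℝ} (hρs : ∀ ρ ∈ ρs, ρ.re ≤ x)
    (hx : x < w.re) : ‖(ρs.map fun ρ => (w - ρ)⁻¹).sum‖ ≤ ρs.card / (w.re - x) := by
  refine (norm_multiset_sum_le _).trans ?_
  rw [Multiset.map_map, div_eq_mul_inv, ← nsmul_eq_mul,
    ← ρs.card_map (norm ∘ fun ρ => (w - ρ)⁻¹)]
  refine Multiset.sum_le_card_nsmul _ _ fun y hy => ?_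
  obtain ⟨ρ, hρ, rfl⟩ := Multiset.mem_map.mp hy
  rw [Function.comp_apply, norm_inv]
  refine inv_anti₀ (sub_pos.mpr hx) (le_trans ?_ (re_le_norm _))
  rw [sub_re]
  linarith [hρs ρ hρ]

namespace IsLandauApprox

variable {f : ℂ → ℂ} {c w : ℂ} {r r₁ R A : ℝ} {ρs : Multiset ℂ}

lemma neg_le_re_logDeriv (h : IsLandauApprox f c r r₁ R A ρs) (hw : ‖w - c‖ ≤ r) (hfw : f w ≠ 0)
    (hρs : ∀ ρ ∈ ρs, ρ.re ≤ w.re) : -(landauConst r r₁ R * A) ≤ (logDeriv f w).re := by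
  have hsub := neg_le_of_abs_le ((abs_re_le_norm _).trans (h.norm_sub_le w hw hfw))
  rw [sub_re] at hsub
  linarith [re_sum_inv_sub_nonneg hρs]

lemma norm_logDeriv_le (h : IsLandauApprox f c r r₁ R A ρs) (hw : ‖w - c‖ ≤ r) (hfw : f w ≠ 0)
    {x : ℝ} (hρs : ∀ ρ ∈ ρs, ρ.re ≤ x) (hx : x < w.re) :
    ‖logDeriv f w‖ ≤ landauConst r r₁ R * A + ρs.card / (w.re - x) :=
  (norm_le_norm_sub_add _ _).trans
    (add_le_add (h.norm_sub_le w hw hfw) (norm_sum_inv_sub_le hρs hx))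

end IsLandauApprox

/-- The logarithm of the analytic conductor `M * (2 + |u|)` of `L(s, χ)` at height `u`. -/
def logConductor (M : ℕ) (u : ℝ) : ℝ := Real.log (M * (2 + |u|))

variable {M : ℕ} [NeZero M]

variable (M) in
lemma two_le_conductor (u : ℝ) : 2 ≤ M * (2 + |u|) := by
  have hM : (1 : ℝ) ≤ M := by exact_mod_cast NeZero.one_le
  nlinarith [abs_nonneg u]

variable (M) in
lemma half_le_logConductor (u : ℝ) : 1 / 2 ≤ logConductor M u := by
  have h := Real.log_le_log two_pos (two_le_conductor M u)
  rw [logConductor]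
  linarith [Real.log_two_gt_d9]

variable {χ : DirichletCharacter ℂ M}

lemma norm_regularizedLFunction_le_exp_mul (u : ℝ) {z : ℂ}
    (hz : z ∈ Metric.closedBall (2 + u * I) (19 / 10)) :
    ‖regularizedLFunction χ z‖ ≤
      ‖regularizedLFunction χ (2 + u * I)‖ * Real.exp (12 * logConductor M u) := by
  have hM : (1 : ℝ) ≤ M := by exact_mod_cast NeZero.one_le
  rw [mem_closedBall_iff_norm] at hz
  have hre : 1 / 10 ≤ z.re := by
    have h := neg_le_of_abs_le ((abs_re_le_norm _).trans hz)
    norm_num at h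
    linarith
  have hnorm : 1 + ‖z‖ ≤ 5 / 2 * (2 + |u|) := by
    have hc : ‖(2 + u * I : ℂ)‖ ≤ 2 + |u| := (norm_add_le _ _).trans (by simp)
    linarith [norm_le_norm_sub_add z (2 + u * I), abs_nonneg u]
  have hcenter : 1 / 4 ≤ ‖regularizedLFunction χ (2 + u * I)‖ :=
    one_quarter_le_norm_regularizedLFunction (by simp)
  set x : ℝ := M * (2 + |u|) with hx
  have hx2 : 2 ≤ x := two_le_conductor M u
  have hexp : Real.exp (12 * logConductor M u) = x ^ 12 := by
    rw [mul_comm, Real.exp_mul, logConductor, Real.exp_log (by linarith)]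
    norm_cast
  rw [hexp]
  calc ‖regularizedLFunction χ z‖ ≤ 30 * M * (5 / 2 * (2 + |u|)) ^ 2 := by
        refine (norm_regularizedLFunction_le hre).trans ?_
        gcongr
    _ ≤ 30 * M ^ 2 * (5 / 2 * (2 + |u|)) ^ 2 := by
        gcongr
        exact le_self_pow₀ hM two_ne_zero
    _ ≤ 1 / 4 * (2 ^ 10 * x ^ 2) := by
        rw [hx]
        nlinarith [sq_nonneg x]
    _ ≤ 1 / 4 * (x ^ 10 * x ^ 2) := by gcongr
    _ ≤ ‖regularizedLFunction χ (2 + u * I)‖ * x ^ 12 := by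
        rw [← pow_add]
        gcongr

lemma exists_isLandauApprox_regularizedLFunction (u : ℝ) :
    ∃ ρs, IsLandauApprox (regularizedLFunction χ) (2 + u * I) (3 / 2) (17 / 10) (19 / 10)
      (12 * logConductor M u) ρs :=
  exists_isLandauApprox (by norm_num) (by norm_num) (by norm_num)
    (differentiable_regularizedLFunction χ).diffContOnCl
    (regularizedLFunction_ne_zero_of_one_le_re (by simp))
    fun _ => norm_regularizedLFunction_le_exp_mul u

/-- An absolute constant for the bounds on the logarithmic derivative of `regularizedLFunction`
under GRH. -/
def logDerivConst : ℝ := 345 * 12 + 2 * vonMangoldtSum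

lemma logDerivConst_pos : 0 < logDerivConst := by
  unfold logDerivConst
  linarith [vonMangoldtSum_nonneg]

lemma one_tenth_le_log : 1 / 10 ≤ Real.log (19 / 10 / (17 / 10)) :=
  le_trans (by norm_num) (Real.one_sub_inv_le_log_of_pos (by norm_num))

lemma landauConst_le : landauConst (3 / 2) (17 / 10) (19 / 10) ≤ 345 := by
  have h : ((19 / 10 - 3 / 2 : ℝ))⁻¹ / Real.log (19 / 10 / (17 / 10)) ≤ 25 := by
    rw [div_le_iff₀ (by linarith [one_tenth_le_log])]
    linarith [one_tenth_le_log]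
  rw [landauConst]
  linarith

lemma norm_logDeriv_regularizedLFunction_le_of_two_le {w : ℂ} (hw : 2 ≤ w.re) :
    ‖logDeriv (regularizedLFunction χ) w‖ ≤ vonMangoldtSum + 1 := by
  have hw1 : w ≠ 1 := fun h => by norm_num [h] at hw
  have hpole : ‖(poleOrder χ : ℂ) / (w - 1)‖ ≤ 1 := by
    have hre : 1 ≤ ‖w - 1‖ := by
      refine le_trans ?_ (re_le_norm _)
      rw [sub_re, one_re]
      linarith
    rw [norm_div, Complex.norm_natCast, div_le_one (by linarith)]
    exact le_trans (by exact_mod_cast poleOrder_le_one χ) hre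
  have hL : ‖logDeriv (LFunction χ) w‖ ≤ vonMangoldtSum := by
    simpa [dirichletPoly, twistedVonMangoldt] using
      norm_logDeriv_LFunction_add_dirichletPoly_le χ hw zero_lt_one
  rw [logDeriv_regularizedLFunction hw1
    (LFunction_ne_zero_of_one_le_re χ (.inr hw1) (by linarith))]
  exact (norm_add_le _ _).trans (add_le_add hL hpole)

lemma norm_logDeriv_regularizedLFunction_le_mul {w : ℂ} (hw : 2 ≤ w.re) :
    ‖logDeriv (regularizedLFunction χ) w‖ ≤ logDerivConst * logConductor M w.im := by
  refine (norm_logDeriv_regularizedLFunction_le_of_two_le hw).trans ?_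
  have h := mul_le_mul_of_nonneg_left (half_le_logConductor M w.im) logDerivConst_pos.le
  rw [logDerivConst] at h ⊢
  linarith

variable {w : ℂ}

lemma regularizedLFunction_ne_zero (hχ : GRHchar χ) (hw : 1 / 2 < w.re) :
    regularizedLFunction χ w ≠ 0 := fun h =>
  hw.ne' (re_eq_of_regularizedLFunction_eq_zero hχ (by linarith) h)

lemma exists_isLandauApprox_re_le_half (hχ : GRHchar χ) (u : ℝ) :
    ∃ ρs : Multiset ℂ, (∀ ρ ∈ ρs, ρ.re ≤ 1 / 2) ∧
      IsLandauApprox (regularizedLFunction χ) (2 + u * I) (3 / 2) (17 / 10) (19 / 10)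
        (12 * logConductor M u) ρs := by
  obtain ⟨ρs, h⟩ := exists_isLandauApprox_regularizedLFunction (χ := χ) u
  refine ⟨ρs, fun ρ hρ => (re_eq_of_regularizedLFunction_eq_zero hχ ?_ (h.zeros ρ hρ).1).le, h⟩
  have hre := neg_le_of_abs_le ((abs_re_le_norm _).trans (h.zeros ρ hρ).2)
  norm_num at hre
  linarith

lemma norm_sub_two_add_im_mul_I_le (hw : 1 / 2 < w.re) (hw' : w.re ≤ 7 / 2) :
    ‖w - (2 + w.im * I)‖ ≤ 3 / 2 := by
  have h : w - (2 + w.im * I) = ((w.re - 2 : ℝ) : ℂ) := Complex.ext (by simp) (by simp)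
  rw [h, norm_real, Real.norm_eq_abs, abs_le]
  constructor <;> linarith

lemma landauConst_mul_le (u : ℝ) : landauConst (3 / 2) (17 / 10) (19 / 10) * (12 * logConductor M u)
    ≤ logDerivConst * logConductor M u := by
  have hℓ := half_le_logConductor M u
  rw [← mul_assoc, logDerivConst]
  refine mul_le_mul_of_nonneg_right ?_ (by linarith)
  linarith [landauConst_le, vonMangoldtSum_nonneg]

lemma neg_le_re_logDeriv_regularizedLFunction (hχ : GRHchar χ) (hw : 1 / 2 < w.re) :
    -(logDerivConst * logConductor M w.im) ≤ (logDeriv (regularizedLFunction χ) w).re := by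
  rcases le_total w.re (7 / 2) with hw' | hw'
  · obtain ⟨ρs, hρs, h⟩ := exists_isLandauApprox_re_le_half hχ w.im
    exact (neg_le_neg (landauConst_mul_le w.im)).trans
      (h.neg_le_re_logDeriv (norm_sub_two_add_im_mul_I_le hw hw')
        (regularizedLFunction_ne_zero hχ hw) fun ρ hρ => (hρs ρ hρ).trans hw.le)
  · exact neg_le_of_abs_le ((abs_re_le_norm _).trans
      (norm_logDeriv_regularizedLFunction_le_mul (by linarith)))

lemma norm_logDeriv_regularizedLFunction_le (hχ : GRHchar χ) (hw : 1 / 2 < w.re) :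
    ‖logDeriv (regularizedLFunction χ) w‖ ≤
      logDerivConst * logConductor M w.im * (1 + 1 / (w.re - 1 / 2)) := by
  have hℓ := half_le_logConductor M w.im
  have hδ : 0 < w.re - 1 / 2 := by linarith
  rw [mul_add, mul_one, ← mul_div_assoc, mul_one]
  rcases le_total w.re (7 / 2) with hw' | hw'
  · obtain ⟨ρs, hρs, h⟩ := exists_isLandauApprox_re_le_half hχ w.im
    refine (h.norm_logDeriv_le (norm_sub_two_add_im_mul_I_le hw hw')
      (regularizedLFunction_ne_zero hχ hw) hρs hw).trans ?_
    have hcard : ρs.card * (1 / 10) ≤ 12 * logConductor M w.im :=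
      (mul_le_mul_of_nonneg_left one_tenth_le_log (Nat.cast_nonneg _)).trans h.card_le
    refine add_le_add (landauConst_mul_le w.im) (div_le_div_of_nonneg_right ?_ hδ.le)
    rw [logDerivConst]
    nlinarith [vonMangoldtSum_nonneg]
  · have := logDerivConst_pos
    exact (norm_logDeriv_regularizedLFunction_le_mul (by linarith)).trans
      (le_add_of_nonneg_right (by positivity))

end LogDerivBounds

section SelbergKernel

/-- Selberg's kernel `X ^ (2w) - X ^ w`, which vanishes at `0` and decays to the left. -/
def selbergKernel (X : ℝ) (w : ℂ) : ℂ := ((X ^ 2 : ℝ) : ℂ) ^ w - (X : ℂ) ^ w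

variable {X : ℝ} {s w z : ℂ}

@[simp]
lemma selbergKernel_zero : selbergKernel X 0 = 0 := by simp [selbergKernel]

lemma hasDerivAt_selbergKernel (hX : 0 < X) (w : ℂ) :
    HasDerivAt (selbergKernel X)
      (((X ^ 2 : ℝ) : ℂ) ^ w * Real.log (X ^ 2) - (X : ℂ) ^ w * Real.log X) w := by
  rw [ofReal_log (by positivity), ofReal_log hX.le]
  exact (hasStrictDerivAt_const_cpow (.inl (by exact_mod_cast (pow_pos hX 2).ne'))).hasDerivAt.sub
    (hasStrictDerivAt_const_cpow (.inl (by exact_mod_cast hX.ne'))).hasDerivAt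

lemma differentiable_selbergKernel (hX : 0 < X) : Differentiable ℂ (selbergKernel X) :=
  fun w => (hasDerivAt_selbergKernel hX w).differentiableAt

lemma hasDerivAt_selbergKernel_sub_self (hX : 0 < X) (s : ℂ) :
    HasDerivAt (fun z => selbergKernel X (z - s)) (Real.log X) s := by
  refine (((sub_self s).symm ▸ hasDerivAt_selbergKernel hX 0 :).comp_sub_const s s).congr_deriv ?_
  rw [Real.log_pow, sub_self, cpow_zero, cpow_zero]
  push_cast
  ring

lemma selbergKernel_conj (hX : 0 ≤ X) (w : ℂ) :
    selbergKernel X (conj w) = conj (selbergKernel X w) := by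
  have h {Y : ℝ} (hY : 0 ≤ Y) : (Y : ℂ) ^ conj w = conj ((Y : ℂ) ^ w) := by
    rw [cpow_conj _ _ (by rw [arg_ofReal_of_nonneg hY]; exact Real.pi_ne_zero.symm), conj_ofReal]
  rw [selbergKernel, selbergKernel, h (sq_nonneg X), h hX, map_sub]

lemma norm_selbergKernel_le (hX : 1 ≤ X) {c : ℝ} (hw : w.re ≤ c) :
    ‖selbergKernel X w‖ ≤ (X ^ 2) ^ c + X ^ c := by
  have h {Y : ℝ} (hY : 1 ≤ Y) : ‖(Y : ℂ) ^ w‖ ≤ Y ^ c := by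
    rw [norm_cpow_eq_rpow_re_of_pos (by linarith)]
    exact Real.rpow_le_rpow_of_exponent_le hY hw
  exact (norm_sub_le _ _).trans (add_le_add (h (one_le_pow₀ hX)) (h hX))

lemma dslope_selbergKernel (hz : z ≠ 1) : dslope (fun z => selbergKernel X (z - s)) 1 z =
    (selbergKernel X (z - s) - selbergKernel X (1 - s)) / (z - 1) := by
  rw [dslope_of_ne _ hz, slope_def_field]

lemma hasDerivAt_dslope_selbergKernel (hX : 0 < X) (hs : s ≠ 1) :
    HasDerivAt (dslope (fun z => selbergKernel X (z - s)) 1)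
      (Real.log X / (s - 1) + selbergKernel X (1 - s) / (s - 1) ^ 2) s := by
  have hs1 : s - 1 ≠ 0 := sub_ne_zero.mpr hs
  have h := ((hasDerivAt_selbergKernel_sub_self hX s).sub_const (selbergKernel X (1 - s))).div
    ((hasDerivAt_id s).sub_const 1) hs1
  refine (h.congr_deriv ?_).congr_of_eventuallyEq ?_
  · rw [sub_self, selbergKernel_zero, id]
    field_simp
    ring
  · filter_upwards [isOpen_ne.mem_nhds hs] with z hz using dslope_selbergKernel hz

lemma differentiable_dslope_selbergKernel (hX : 0 < X) (s : ℂ) :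
    Differentiable ℂ (dslope (fun z => selbergKernel X (z - s)) 1) := by
  rw [← differentiableOn_univ, differentiableOn_dslope univ_mem, differentiableOn_univ]
  exact (differentiable_selbergKernel hX).comp (differentiable_id.sub_const s)

lemma norm_dslope_selbergKernel_le (hX : 1 ≤ X) {c : ℝ} (hz : z.re ≤ c) (hz1 : 1 ≤ ‖z - 1‖) :
    ‖dslope (fun z => selbergKernel X (z - s)) 1 z‖ ≤
      (X ^ 2) ^ (c - s.re) + X ^ (c - s.re) + ‖selbergKernel X (1 - s)‖ := by
  have hne : z ≠ 1 := fun h => by norm_num [h] at hz1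
  rw [dslope_selbergKernel hne, norm_div]
  refine (div_le_self (norm_nonneg _) hz1).trans ((norm_sub_le _ _).trans ?_)
  gcongr
  exact norm_selbergKernel_le hX (by rw [sub_re]; linarith)

end SelbergKernel

section SmoothedLogDeriv

variable {M : ℕ} [NeZero M] (χ : DirichletCharacter ℂ M)

/-- The entire function which, added to the logarithmic derivative of `regularizedLFunction χ`
times `selbergKernel X (z - s)`, makes the result bounded far to the right. -/
def selbergCorrection (X : ℝ) (s z : ℂ) : ℂ :=
  dirichletPoly (twistedVonMangoldt χ) (X ^ 2) z * ((X ^ 2 : ℝ) : ℂ) ^ (z - s) -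
    dirichletPoly (twistedVonMangoldt χ) X z * (X : ℂ) ^ (z - s) -
    poleOrder χ * dslope (fun z => selbergKernel X (z - s)) 1 z

/-- The error in the approximation of `L'/L(s, χ)` by the Dirichlet polynomial
`-∑ Λ_X(m) χ(m) m ^ (-s)` over `m ≤ X²`. -/
def logDerivError (X : ℝ) (s : ℂ) : ℂ :=
  logDeriv (LFunction χ) s + dirichletPoly (fun m => LambdaX X m * χ m) (X ^ 2) s

/-- Selberg's function, whose derivative at `s` is `log X` times `logDerivError χ X s`, up to a
term coming from the pole. -/
def smoothedLogDeriv (X : ℝ) (s z : ℂ) : ℂ :=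
  logDeriv (regularizedLFunction χ) z * selbergKernel X (z - s) + selbergCorrection χ X s z

variable {χ} {X : ℝ} {s z : ℂ}

lemma norm_poleOrder_mul_le (x : ℂ) : ‖(poleOrder χ : ℂ) * x‖ ≤ ‖x‖ := by
  rw [norm_mul, Complex.norm_natCast]
  exact mul_le_of_le_one_left (norm_nonneg _) (by exact_mod_cast poleOrder_le_one χ)

lemma differentiable_selbergCorrection (hX : 0 < X) (s : ℂ) :
    Differentiable ℂ (selbergCorrection χ X s) := fun z =>
  (((hasDerivAt_dirichletPoly_mul_cpow _ (pow_pos hX 2) s z).sub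
    (hasDerivAt_dirichletPoly_mul_cpow _ hX s z)).differentiableAt).sub
    ((differentiable_dslope_selbergKernel hX s z).const_mul _)

lemma exists_norm_selbergCorrection_le (hX : 1 ≤ X) (s : ℂ) (c : ℝ) :
    ∃ K, ∀ z : ℂ, z.re ≤ c → 1 ≤ ‖z - 1‖ → ‖selbergCorrection χ X s z‖ ≤ K := by
  obtain ⟨K₁, hK₁⟩ :=
    exists_norm_dirichletPoly_mul_cpow_le (twistedVonMangoldt χ) (sq_nonneg X) s c
  obtain ⟨K₂, hK₂⟩ :=
    exists_norm_dirichletPoly_mul_cpow_le (twistedVonMangoldt χ) (zero_le_one.trans hX) s c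
  refine ⟨_, fun z hz hz1 => (norm_sub_le _ _).trans (add_le_add
    ((norm_sub_le _ _).trans (add_le_add (hK₁ z hz) (hK₂ z hz)))
    ((norm_poleOrder_mul_le _).trans (norm_dslope_selbergKernel_le hX hz hz1)))⟩

lemma smoothedLogDeriv_eq (hz : z ≠ 1) (hL : LFunction χ z ≠ 0) :
    smoothedLogDeriv χ X s z =
      (logDeriv (LFunction χ) z + dirichletPoly (twistedVonMangoldt χ) (X ^ 2) z) *
          ((X ^ 2 : ℝ) : ℂ) ^ (z - s) -
        (logDeriv (LFunction χ) z + dirichletPoly (twistedVonMangoldt χ) X z) *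
          (X : ℂ) ^ (z - s) +
        poleOrder χ * (selbergKernel X (1 - s) / (z - 1)) := by
  rw [smoothedLogDeriv, selbergCorrection, logDeriv_regularizedLFunction hz hL,
    dslope_selbergKernel hz]
  generalize selbergKernel X (1 - s) = κ
  rw [selbergKernel]
  ring

lemma norm_logDeriv_add_dirichletPoly_mul_cpow_le (hz : 2 ≤ z.re) {Y : ℝ} (hY : 0 < Y) (s : ℂ) :
    ‖(logDeriv (LFunction χ) z + dirichletPoly (twistedVonMangoldt χ) Y z) * (Y : ℂ) ^ (z - s)‖ ≤
      Y ^ (2 - s.re) * vonMangoldtSum := by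
  rw [norm_mul, norm_cpow_eq_rpow_re_of_pos hY, sub_re]
  calc _ ≤ Y ^ (2 - z.re) * vonMangoldtSum * Y ^ (z.re - s.re) := by
        gcongr
        exact norm_logDeriv_LFunction_add_dirichletPoly_le χ hz hY
    _ = Y ^ (2 - s.re) * vonMangoldtSum := by
        rw [mul_right_comm, ← Real.rpow_add hY]
        ring_nf

lemma norm_smoothedLogDeriv_le (hX : 0 < X) (hz : 2 ≤ z.re) :
    ‖smoothedLogDeriv χ X s z‖ ≤ (X ^ 2) ^ (2 - s.re) * vonMangoldtSum +
      X ^ (2 - s.re) * vonMangoldtSum + ‖selbergKernel X (1 - s)‖ := by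
  have hz1 : 1 ≤ ‖z - 1‖ := by
    refine le_trans ?_ (re_le_norm _)
    rw [sub_re, one_re]
    linarith
  have hne : z ≠ 1 := fun h => by norm_num [h] at hz1
  rw [smoothedLogDeriv_eq hne (LFunction_ne_zero_of_one_le_re χ (.inr hne) (by linarith))]
  refine (norm_add_le _ _).trans (add_le_add ((norm_sub_le _ _).trans (add_le_add
    (norm_logDeriv_add_dirichletPoly_mul_cpow_le hz (pow_pos hX 2) s)
    (norm_logDeriv_add_dirichletPoly_mul_cpow_le hz hX s))) ?_)
  refine (norm_poleOrder_mul_le _).trans ?_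
  rw [norm_div]
  exact div_le_self (norm_nonneg _) hz1

lemma exists_norm_smoothedLogDeriv_le (hX : 1 ≤ X) (s : ℂ) :
    ∃ K K', ∀ z : ℂ, 1 ≤ ‖z - 1‖ →
      ‖smoothedLogDeriv χ X s z‖ ≤ K * ‖logDeriv (regularizedLFunction χ) z‖ + K' := by
  obtain ⟨K', hK'⟩ := exists_norm_selbergCorrection_le (χ := χ) hX s 2
  refine ⟨(X ^ 2) ^ (2 - s.re) + X ^ (2 - s.re), max K' ((X ^ 2) ^ (2 - s.re) * vonMangoldtSum +
    X ^ (2 - s.re) * vonMangoldtSum + ‖selbergKernel X (1 - s)‖), fun z hz1 => ?_⟩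
  rcases le_total z.re 2 with hz | hz
  · refine (norm_add_le _ _).trans (add_le_add ?_ ((hK' z hz hz1).trans (le_max_left _ _)))
    rw [norm_mul, mul_comm]
    gcongr
    exact norm_selbergKernel_le hX (by rw [sub_re]; linarith)
  · exact ((norm_smoothedLogDeriv_le (by linarith) hz).trans (le_max_right _ _)).trans
      (le_add_of_nonneg_left (by positivity))

lemma sum_mul_log_sub_sum_mul_log (a : ℕ → ℂ) (hX : 1 < X) :
    ∑ m ∈ Icc 1 ⌊X ^ 2⌋₊, a m * Real.log (X ^ 2 / m) - ∑ m ∈ Icc 1 ⌊X⌋₊, a m * Real.log (X / m) =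
      Real.log X * ∑ m ∈ Icc 1 ⌊X ^ 2⌋₊, a m * wX X m := by
  have hX0 : 0 < X := by linarith
  have hlog : ((Real.log X : ℝ) : ℂ) ≠ 0 := by exact_mod_cast (Real.log_pos hX).ne'
  have hfilter : Icc 1 ⌊X⌋₊ = (Icc 1 ⌊X ^ 2⌋₊).filter fun m : ℕ => (m : ℝ) ≤ X := by
    ext m
    have hmono : ⌊X⌋₊ ≤ ⌊X ^ 2⌋₊ := Nat.floor_le_floor (by nlinarith)
    rw [mem_filter, mem_Icc, mem_Icc, ← Nat.le_floor_iff hX0.le]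
    omega
  rw [hfilter, sum_filter, ← sum_sub_distrib, mul_sum]
  refine sum_congr rfl fun m hm => ?_
  have hm0 : (m : ℝ) ≠ 0 := by exact_mod_cast Nat.one_le_iff_ne_zero.mp (mem_Icc.mp hm).1
  rw [wX]
  split_ifs
  · rw [Real.log_div (by positivity) hm0, Real.log_div hX0.ne' hm0, Real.log_pow]
    push_cast
    ring
  · push_cast
    field_simp
    ring

lemma differentiableAt_logDeriv {f : ℂ → ℂ} (hf : Differentiable ℂ f) (hz : f z ≠ 0) :
    DifferentiableAt ℂ (logDeriv f) z :=
  (hf.analyticAt z).deriv.differentiableAt.div (hf z) hz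

lemma hasDerivAt_smoothedLogDeriv (hX : 1 < X) (hs : s ≠ 1) (hL : LFunction χ s ≠ 0) :
    HasDerivAt (smoothedLogDeriv χ X s)
      (Real.log X * logDerivError χ X s -
        poleOrder χ * (selbergKernel X (1 - s) / (s - 1) ^ 2)) s := by
  have hX0 : 0 < X := by linarith
  have hf : regularizedLFunction χ s ≠ 0 := by
    rw [regularizedLFunction_of_ne_one hs]
    exact mul_ne_zero (pow_ne_zero _ (sub_ne_zero.mpr hs)) hL
  have hG := (differentiableAt_logDeriv (differentiable_regularizedLFunction χ) hf).hasDerivAt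
  have hweights := sum_mul_log_sub_sum_mul_log
    (fun m => twistedVonMangoldt χ m * (m : ℂ) ^ (-s)) hX
  refine ((hG.mul (hasDerivAt_selbergKernel_sub_self hX0 s)).add
    (((hasDerivAt_dirichletPoly_mul_cpow (twistedVonMangoldt χ) (pow_pos hX0 2) s s).sub
      (hasDerivAt_dirichletPoly_mul_cpow (twistedVonMangoldt χ) hX0 s s)).sub
      ((hasDerivAt_dslope_selbergKernel hX0 hs).const_mul (poleOrder χ : ℂ)))).congr_deriv ?_
  simp only [sub_self, cpow_zero, one_mul, selbergKernel_zero, mul_zero, zero_add]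
  rw [hweights, logDeriv_regularizedLFunction hs hL]
  have hpoly : dirichletPoly (fun m => LambdaX X m * χ m) (X ^ 2) s =
      ∑ m ∈ Icc 1 ⌊X ^ 2⌋₊, twistedVonMangoldt χ m * (m : ℂ) ^ (-s) * wX X m :=
    sum_congr rfl fun m _ => by
      simp only [LambdaX, twistedVonMangoldt, ofReal_mul]
      ring
  rw [logDerivError, hpoly]
  ring

end SmoothedLogDeriv

section LogDerivMajorant

lemma isBigO_clog_cobounded {r : ℝ} (hr : 0 < r) :
    Complex.log =O[Bornology.cobounded ℂ] fun z => ‖z‖ ^ r := by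
  have hre := (isBigO_ofReal_left.mpr
    ((isLittleO_log_rpow_atTop hr).comp_tendsto (tendsto_norm_cobounded_atTop (E := ℂ))).isBigO)
  have harg : (fun z : ℂ => (arg z : ℂ) * I) =O[Bornology.cobounded ℂ] fun z => ‖z‖ ^ r := by
    refine .of_bound Real.pi ?_
    filter_upwards [eventually_cobounded_le_norm 1] with z hz
    rw [norm_mul, norm_I, mul_one, norm_real, Real.norm_eq_abs,
      Real.norm_of_nonneg (by positivity : 0 ≤ ‖z‖ ^ r)]
    exact (abs_arg_le_pi z).trans (le_mul_of_one_le_right Real.pi_pos.le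
      (Real.one_le_rpow hz hr.le))
  exact hre.add harg

lemma isBigO_clog_add_const (c : ℂ) {r : ℝ} (hr : 0 < r) :
    (fun z => Complex.log (z + c)) =O[rightInfinity] fun z => ‖z‖ ^ r := by
  have hgrowth := ((isBigO_add_const c).norm_left.rpow hr.le
    (.of_forall fun z => by positivity)).congr_right fun z => by rw [Real.rpow_one]
  exact ((isBigO_clog_cobounded hr).comp_tendsto
    ((tendsto_add_const_cobounded c).mono_left inf_le_left)).trans hgrowth

/-- An analytic function on the right half-plane whose real part dominates `logConductor M z.im`. -/
def logMajorant (M : ℕ) (z : ℂ) : ℂ := Real.log (2 * M) + Complex.log (z + 2)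

lemma re_logMajorant (M : ℕ) (z : ℂ) :
    (logMajorant M z).re = Real.log (2 * M) + Real.log ‖z + 2‖ := by
  rw [logMajorant, add_re, ofReal_re, log_re]

lemma isBigO_logMajorant_add (M : ℕ) (p : ℂ) {r : ℝ} (hr : 0 < r) :
    (fun v => logMajorant M (p + v)) =O[rightInfinity] fun v => ‖v‖ ^ r :=
  (isBigO_const_rpow _ hr.le).add
    ((isBigO_clog_add_const (p + 2) hr).congr_left fun v => by ring_nf)

variable {M : ℕ} [NeZero M] {χ : DirichletCharacter ℂ M} {p z : ℂ}

lemma logConductor_le_re_logMajorant (hz : 0 ≤ z.re) :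
    logConductor M z.im ≤ (logMajorant M z).re := by
  have hM : (0 : ℝ) < M := by exact_mod_cast NeZero.pos M
  have hre : 2 ≤ ‖z + 2‖ := by
    refine le_trans ?_ (re_le_norm _)
    rw [add_re, re_ofNat]
    linarith
  have him : |z.im| ≤ ‖z + 2‖ := by simpa using abs_im_le_norm (z + 2)
  rw [re_logMajorant, ← Real.log_mul (by positivity) (by linarith), logConductor]
  refine Real.log_le_log (by positivity) ?_
  calc (M : ℝ) * (2 + |z.im|) ≤ M * (‖z + 2‖ + ‖z + 2‖) := by gcongr
    _ = 2 * M * ‖z + 2‖ := by ring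

variable (χ) in
/-- A function whose real part dominates `|Re f'/f|` to the right of the critical line under GRH,
where `f` is `regularizedLFunction χ`. -/
def logDerivMajorant (z : ℂ) : ℂ :=
  logDeriv (regularizedLFunction χ) z + 2 * logDerivConst * logMajorant M z

lemma re_logDerivMajorant : (logDerivMajorant χ z).re =
    (logDeriv (regularizedLFunction χ) z).re + 2 * logDerivConst * (logMajorant M z).re := by
  rw [logDerivMajorant, add_re, ← ofReal_ofNat, ← ofReal_mul, re_ofReal_mul]

lemma abs_re_logDeriv_le_re_logDerivMajorant (hχ : GRHchar χ) (hz : 1 / 2 < z.re) :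
    |(logDeriv (regularizedLFunction χ) z).re| ≤ (logDerivMajorant χ z).re := by
  have hlower := neg_le_re_logDeriv_regularizedLFunction hχ hz
  have hmaj := mul_le_mul_of_nonneg_left
    (logConductor_le_re_logMajorant (M := M) (z := z) (by linarith)) logDerivConst_pos.le
  have hℓ := mul_nonneg logDerivConst_pos.le
    ((half_le_logConductor M z.im).trans' (by norm_num))
  rw [re_logDerivMajorant, abs_le]
  constructor <;> linarith

lemma isBigO_logDeriv_add (hχ : GRHchar χ) (hp : 1 / 2 < p.re) {r : ℝ} (hr : 0 < r) :
    (fun v => logDeriv (regularizedLFunction χ) (p + v)) =O[rightInfinity] fun v => ‖v‖ ^ r := by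
  have hB := logDerivConst_pos
  refine .trans (.of_bound (logDerivConst * (1 + 1 / (p.re - 1 / 2))) ?_)
    (isBigO_logMajorant_add M p hr)
  filter_upwards [mem_inf_of_right (mem_principal_self _)] with v hv
  replace hv : 0 ≤ v.re := hv
  have hre : p.re ≤ (p + v).re := by
    rw [add_re]
    linarith
  have : 0 < p.re - 1 / 2 := sub_pos.mpr hp
  have hδv : 0 < (p + v).re - 1 / 2 := by linarith
  have hmaj : logConductor M (p + v).im ≤ ‖logMajorant M (p + v)‖ :=
    (logConductor_le_re_logMajorant (by linarith)).trans (re_le_norm _)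
  calc _ ≤ logDerivConst * logConductor M (p + v).im * (1 + 1 / ((p + v).re - 1 / 2)) :=
        norm_logDeriv_regularizedLFunction_le hχ (by linarith)
    _ ≤ logDerivConst * ‖logMajorant M (p + v)‖ * (1 + 1 / (p.re - 1 / 2)) := by gcongr
    _ = _ := by ring

lemma diffContOnCl_comp_add {f : ℂ → ℂ} (hf : ∀ z, p.re ≤ z.re → DifferentiableAt ℂ f z) :
    DiffContOnCl ℂ (fun v => f (p + v)) {v | 0 < v.re} := by
  refine DifferentiableOn.diffContOnCl fun v hv => ?_
  rw [closure_setOfPred_lt_re] at hv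
  have hv' : p.re ≤ (p + v).re := by
    rw [add_re]
    exact le_add_of_nonneg_right hv
  exact ((hf _ hv').comp v (differentiableAt_id.const_add p)).differentiableWithinAt

lemma differentiableAt_logDeriv_regularizedLFunction (hχ : GRHchar χ) (hz : 1 / 2 < z.re) :
    DifferentiableAt ℂ (logDeriv (regularizedLFunction χ)) z :=
  differentiableAt_logDeriv (differentiable_regularizedLFunction χ)
    (regularizedLFunction_ne_zero hχ hz)

lemma differentiableAt_logDerivMajorant (hχ : GRHchar χ) (hz : 1 / 2 < z.re) :
    DifferentiableAt ℂ (logDerivMajorant χ) z := by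
  have hslit : z + 2 ∈ slitPlane := by
    refine .inl ?_
    rw [add_re, re_ofNat]
    linarith
  exact (differentiableAt_logDeriv_regularizedLFunction hχ hz).add
    (((differentiableAt_id.add_const 2).clog hslit).const_add _ |>.const_mul _)

lemma isBigO_logDerivMajorant_add (hχ : GRHchar χ) (hp : 1 / 2 < p.re) {r : ℝ} (hr : 0 < r) :
    (fun v => logDerivMajorant χ (p + v)) =O[rightInfinity] fun v => ‖v‖ ^ r :=
  (isBigO_logDeriv_add hχ hp hr).add ((isBigO_logMajorant_add M p hr).const_mul_left _)

end LogDerivMajorant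

section Selberg

variable {M : ℕ} [NeZero M] {χ : DirichletCharacter ℂ M} {X : ℝ} {p s : ℂ}

lemma eventually_one_le_norm_sub_one (p : ℂ) :
    ∀ᶠ v in rightInfinity, 1 ≤ ‖p + v - 1‖ ∧ 1 ≤ ‖p - v - 1‖ := by
  filter_upwards [eventually_le_norm_rightInfinity (1 + ‖p - 1‖)] with v hv
  have hplus := norm_sub_norm_le v (-(p - 1))
  have hminus := norm_sub_norm_le v (p - 1)
  rw [norm_neg, show v - -(p - 1) = p + v - 1 by ring] at hplus
  rw [show v - (p - 1) = -(p - v - 1) by ring, norm_neg] at hminus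
  constructor <;> linarith

lemma isBigO_selbergCorrection_sub (hX : 1 ≤ X) (s p : ℂ) {r : ℝ} (hr : 0 ≤ r) :
    (fun v => selbergCorrection χ X s (p - v)) =O[rightInfinity] fun v => ‖v‖ ^ r := by
  obtain ⟨K, hK⟩ := exists_norm_selbergCorrection_le (χ := χ) hX s p.re
  refine .trans (.of_bound K ?_) (isBigO_const_rpow (1 : ℝ) hr)
  filter_upwards [eventually_one_le_norm_sub_one p, mem_inf_of_right (mem_principal_self _)]
    with v hv hv0
  rw [norm_one, mul_one]
  refine hK _ ?_ hv.2
  rw [sub_re]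
  exact sub_le_self _ hv0

lemma isBigO_smoothedLogDeriv_add (hχ : GRHchar χ) (hX : 1 ≤ X) (s : ℂ) (hp : 1 / 2 < p.re)
    {r : ℝ} (hr : 0 < r) :
    (fun v => smoothedLogDeriv χ X s (p + v)) =O[rightInfinity] fun v => ‖v‖ ^ r := by
  obtain ⟨K, K', hK⟩ := exists_norm_smoothedLogDeriv_le (χ := χ) hX s
  refine .trans (.of_norm_eventuallyLE ?_) (((isBigO_logDeriv_add hχ hp hr).norm_left.const_mul_left
    K).add (isBigO_const_rpow K' hr.le))
  filter_upwards [eventually_one_le_norm_sub_one p] with v hv using hK _ hv.1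

lemma norm_deriv_smoothedLogDeriv_le (hχ : GRHchar χ) (hX : 1 ≤ X) (hp : 1 / 2 < p.re)
    {b b₁ : ℝ} (hb₁ : 0 < b₁) (hb : b₁ ≤ b) :
    ‖deriv (smoothedLogDeriv χ X (p + b)) (p + b)‖ ≤
      ((X ^ 2) ^ (-b) + X ^ (-b)) / b₁ * (logDerivMajorant χ (p + b₁)).re := by
  have hX0 : 0 < X := by linarith
  have hr : (0 : ℝ) < 1 / 2 := by norm_num
  have hshift (v : ℂ) : smoothedLogDeriv χ X (p + b) (p + v) =
      logDeriv (regularizedLFunction χ) (p + v) * selbergKernel X (v - b) +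
        selbergCorrection χ X (p + b) (p + v) := by
    rw [smoothedLogDeriv, add_sub_add_left_eq_sub]
  rw [← deriv_comp_const_add]
  simp only [hshift]
  refine norm_deriv_le_of_abs_re_le (differentiable_selbergKernel hX0)
    (fun w hw => norm_selbergKernel_le hX hw) (selbergKernel_conj hX0.le)
    (diffContOnCl_comp_add fun z hz =>
      differentiableAt_logDeriv_regularizedLFunction hχ (hp.trans_le hz))
    (isBigO_logDeriv_add hχ hp hr) (by norm_num) (hb₁.trans_le hb) hr.le
    ((differentiable_selbergCorrection hX0 (p + b)).comp (differentiable_id.const_add p))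
    (isBigO_selbergCorrection_sub hX (p + b) p hr.le)
    ((isBigO_smoothedLogDeriv_add hχ hX (p + b) hp hr).congr_left hshift)
    (diffContOnCl_comp_add (f := logDerivMajorant χ) fun z hz =>
      differentiableAt_logDerivMajorant hχ (hp.trans_le hz))
    (isBigO_logDerivMajorant_add hχ hp hr) (fun y => ?_) hb₁ hb
  exact abs_re_logDeriv_le_re_logDerivMajorant hχ (by simpa using hp)

end Selberg

section Conclusion

variable {M : ℕ} [NeZero M] {χ : DirichletCharacter ℂ M} {X t σ : ℝ} {s : ℂ}

lemma rpow_neg_le_one_quarter (hX : 1 < X) {b : ℝ} (hb : 3 / Real.log X ≤ b) :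
    X ^ (-b) ≤ 1 / 4 := by
  have hexp := Real.add_one_le_exp (Real.log X * b)
  have hlog : 3 ≤ Real.log X * b := (div_le_iff₀' (Real.log_pos hX)).mp hb
  rw [Real.rpow_def_of_pos (by linarith), mul_neg, Real.exp_neg, ← one_div]
  exact one_div_le_one_div_of_le (by norm_num) (by linarith)

lemma norm_selbergKernel_one_sub_div_le (hX : 1 ≤ X) (hs : 1 / 2 ≤ s.re)
    (hXs : X ≤ ‖s - 1‖ ^ 2) : ‖selbergKernel X (1 - s) / (s - 1) ^ 2‖ ≤ 2 := by
  have hκ : ‖selbergKernel X (1 - s)‖ ≤ (X ^ 2) ^ (1 / 2 : ℝ) + X ^ (1 / 2 : ℝ) :=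
    norm_selbergKernel_le hX (by rw [sub_re, one_re]; linarith)
  have hsqrt : X ^ (1 / 2 : ℝ) ≤ X := Real.rpow_le_self_of_one_le hX (by norm_num)
  rw [← Real.sqrt_eq_rpow (X ^ 2), Real.sqrt_sq (by linarith)] at hκ
  rw [norm_div, norm_pow, div_le_iff₀ (by linarith)]
  linarith

lemma re_logMajorant_le (hs : 0 ≤ s.re) (hs' : s.re ≤ 7 / 2) (him : 2 ≤ |s.im|) :
    (logMajorant M s).re ≤ 3 * Real.log (M * (1 + |s.im|)) := by
  have hM : (1 : ℝ) ≤ M := by exact_mod_cast NeZero.one_le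
  have hlower : 2 ≤ ‖s + 2‖ := by
    refine le_trans ?_ (re_le_norm _)
    rw [add_re, re_ofNat]
    linarith
  have hupper : ‖s + 2‖ ≤ 11 / 2 + |s.im| := by
    refine (norm_le_abs_re_add_abs_im _).trans ?_
    rw [add_re, add_im, re_ofNat, im_ofNat, add_zero, abs_of_nonneg (by linarith)]
    linarith
  have hlinear : 2 * M * ‖s + 2‖ ≤ 5 * (M * (1 + |s.im|)) := by
    linarith [mul_le_mul_of_nonneg_left
      (by linarith : 2 * ‖s + 2‖ ≤ 5 * (1 + |s.im|)) (zero_le_one.trans hM)]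
  have hthree : 3 ≤ M * (1 + |s.im|) := by nlinarith
  generalize (M : ℝ) * (1 + |s.im|) = y at hlinear hthree ⊢
  rw [re_logMajorant, ← Real.log_mul (by positivity) (by linarith),
    ← Nat.cast_ofNat (n := 3), ← Real.log_pow]
  refine Real.log_le_log (by positivity) (hlinear.trans ?_)
  calc 5 * y ≤ (3 * 3) * y := by gcongr; norm_num
    _ ≤ (y * y) * y := by gcongr
    _ = y ^ 3 := by ring

lemma half_lt_sigma1 (hX : 1 < X) : 1 / 2 < sigma1 X :=
  lt_add_of_pos_right _ (div_pos (by norm_num) (Real.log_pos hX))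

lemma norm_deriv_smoothedLogDeriv_le_of_sigma1_le (hχ : GRHchar χ) (hX : 1 < X)
    (hσ : sigma1 X ≤ σ) :
    ‖deriv (smoothedLogDeriv χ X (σ + I * t)) (σ + I * t)‖ ≤
      Real.log X / 4 * (logDerivMajorant χ (sigma1 X + I * t)).re := by
  have hlog := Real.log_pos hX
  obtain ⟨p, hp⟩ : ∃ p : ℂ, p = (1 / 2 + 1 / Real.log X : ℝ) + I * t := ⟨_, rfl⟩
  obtain ⟨b, hb⟩ : ∃ b, b = σ - (1 / 2 + 1 / Real.log X) := ⟨_, rfl⟩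
  have hpre : p.re = 1 / 2 + 1 / Real.log X := by simp [hp]
  have hσp : p + b = σ + I * t := by rw [hp, hb, ofReal_sub]; ring
  have hσ₁ : sigma1 X = 1 / 2 + 1 / Real.log X + 3 / Real.log X := by rw [sigma1]; ring
  have hσ₁p : p + (3 / Real.log X : ℝ) = sigma1 X + I * t := by
    rw [hp, hσ₁, ofReal_add _ (3 / _)]
    ring
  have hb₁ : 3 / Real.log X ≤ b := by linarith
  have hp' : 1 / 2 < p.re := by rw [hpre]; exact lt_add_of_pos_right _ (by positivity)
  have hquarter := rpow_neg_le_one_quarter hX hb₁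
  have hquarter' : (X ^ 2) ^ (-b) ≤ X ^ (-b) :=
    Real.rpow_le_rpow_of_nonpos (by linarith) (by nlinarith)
      (neg_nonpos.mpr ((by positivity : 0 ≤ 3 / Real.log X).trans hb₁))
  have hmaj : 0 ≤ (logDerivMajorant χ (sigma1 X + I * t)).re :=
    (abs_nonneg _).trans
      (abs_re_logDeriv_le_re_logDerivMajorant hχ (by simpa using half_lt_sigma1 hX))
  have hmain := norm_deriv_smoothedLogDeriv_le hχ hX.le hp' (by positivity) hb₁
  rw [hσp, hσ₁p] at hmain
  refine hmain.trans (mul_le_mul_of_nonneg_right ?_ hmaj)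
  rw [div_le_iff₀ (by positivity), show Real.log X / 4 * (3 / Real.log X) = 3 / 4 by field_simp]
  linarith

lemma one_le_log_of_three_le {x : ℝ} (hx : 3 ≤ x) : 1 ≤ Real.log x := by
  rw [Real.le_log_iff_exp_le (by linarith)]
  linarith [Real.exp_one_lt_three]

lemma LFunction_ne_zero_of_half_lt_re (hχ : GRHchar χ) (hs : 1 / 2 < s.re) (hs1 : s ≠ 1) :
    LFunction χ s ≠ 0 := by
  have h := regularizedLFunction_ne_zero hχ hs
  rw [regularizedLFunction_of_ne_one hs1] at h
  exact right_ne_zero_of_mul h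

lemma norm_logDerivError_le_re_logDerivMajorant (hχ : GRHchar χ) (hX : 4 ≤ X) (hXt : X ≤ t ^ 2)
    (hσ : sigma1 X ≤ σ) : ‖logDerivError χ X (σ + I * t)‖ ≤
      2 + (logDerivMajorant χ (sigma1 X + I * t)).re / 4 := by
  obtain ⟨s, hs⟩ : ∃ s : ℂ, s = σ + I * t := ⟨_, rfl⟩
  have hre : 1 / 2 < s.re := by simpa [hs] using (half_lt_sigma1 (by linarith)).trans_le hσ
  have him : |t| ≤ ‖s - 1‖ := by simpa [hs] using abs_im_le_norm (s - 1)
  have hXs : X ≤ ‖s - 1‖ ^ 2 := hXt.trans (sq_le_sq.mpr (by rwa [abs_norm]))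
  have hs1 : s ≠ 1 := by
    rintro rfl
    norm_num at hXs
    linarith
  have hlog : 1 ≤ Real.log X := one_le_log_of_three_le (by linarith)
  have hpole := (norm_poleOrder_mul_le (χ := χ) (selbergKernel X (1 - s) / (s - 1) ^ 2)).trans
    (norm_selbergKernel_one_sub_div_le (by linarith) hre.le hXs)
  have hderiv := norm_deriv_smoothedLogDeriv_le_of_sigma1_le (t := t) hχ (by linarith) hσ
  rw [← hs, (hasDerivAt_smoothedLogDeriv (by linarith) hs1
    (LFunction_ne_zero_of_half_lt_re hχ hre hs1)).deriv] at hderiv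
  rw [← hs]
  have htriangle := (norm_le_insert' _ _).trans (add_le_add hpole hderiv)
  rw [norm_mul, norm_real, Real.norm_of_nonneg (by linarith)] at htriangle
  refine le_of_mul_le_mul_left ?_ (by linarith : 0 < Real.log X)
  linarith

lemma re_logDerivMajorant_le (hs : 0 ≤ s.re) (hs' : s.re ≤ 7 / 2) (him : 2 ≤ |s.im|)
    (hL : LFunction χ s ≠ 0) : (logDerivMajorant χ s).re ≤
      ‖logDeriv (LFunction χ) s‖ + 1 / 2 + 6 * logDerivConst * Real.log (M * (1 + |s.im|)) := by
  have hs1 : 2 ≤ ‖s - 1‖ := him.trans (by simpa using abs_im_le_norm (s - 1))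
  have hne : s ≠ 1 := fun h => by norm_num [h] at hs1
  have hpole : ‖(poleOrder χ : ℂ) / (s - 1)‖ ≤ 1 / 2 := by
    rw [div_eq_mul_inv]
    refine (norm_poleOrder_mul_le _).trans ?_
    rw [norm_inv, ← one_div]
    exact one_div_le_one_div_of_le two_pos hs1
  have hmaj := mul_le_mul_of_nonneg_left (re_logMajorant_le (M := M) hs hs' him)
    (mul_nonneg two_pos.le logDerivConst_pos.le)
  rw [re_logDerivMajorant, logDeriv_regularizedLFunction hne hL]
  linarith [(re_le_norm _).trans (norm_add_le (logDeriv (LFunction χ) s) (poleOrder χ / (s - 1)))]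

lemma sigma1_le (hX : 4 ≤ X) : sigma1 X ≤ 7 / 2 := by
  have hlog2 := Real.log_two_gt_d9
  have hlog : Real.log (2 ^ 2) ≤ Real.log X := Real.log_le_log (by norm_num) (by linarith)
  rw [Real.log_pow] at hlog
  push_cast at hlog
  have h : 4 / Real.log X ≤ 3 := (div_le_iff₀ (by linarith)).mpr (by linarith)
  rw [sigma1]
  linarith

lemma EchiT_eq {N : ℕ} {χ : DirichletCharacter ℂ N} : EchiT χ X t =
    ‖dirichletPoly (fun m => LambdaX X m * χ m) (X ^ 2) (sigma1 X + I * t)‖ +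
      Real.log (N * (1 + |t|)) := by
  simp only [EchiT, dirichletPoly, neg_add']

lemma norm_logDerivError_le (hχ : GRHchar χ) (hX : 4 ≤ X) (hXt : X ≤ t ^ 2)
    (hσ : sigma1 X ≤ σ) : ‖logDerivError χ X (σ + I * t)‖ ≤
      (4 + 2 * logDerivConst) * EchiT χ X t := by
  have ht : 2 ≤ |t| := by
    rw [← abs_two, ← sq_le_sq]
    linarith
  have hM : (1 : ℝ) ≤ M := by exact_mod_cast NeZero.one_le
  have hlog : 1 ≤ Real.log (M * (1 + |t|)) := one_le_log_of_three_le (by nlinarith)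
  obtain ⟨s₁, hs₁⟩ : ∃ s₁ : ℂ, s₁ = sigma1 X + I * t := ⟨_, rfl⟩
  have hre : s₁.re = sigma1 X := by simp [hs₁]
  have him : s₁.im = t := by simp [hs₁]
  have hhalf := half_lt_sigma1 (by linarith : 1 < X)
  have hne : s₁ ≠ 1 := fun h => by norm_num [← him, h] at ht
  have hL := LFunction_ne_zero_of_half_lt_re hχ (by rwa [hre]) hne
  have hσ_bound := norm_logDerivError_le_re_logDerivMajorant hχ hX hXt hσ
  have hσ₁_bound := norm_logDerivError_le_re_logDerivMajorant hχ hX hXt le_rfl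
  have hmaj := re_logDerivMajorant_le (by linarith) (by linarith [sigma1_le hX])
    (by rwa [him]) hL
  have hF : ‖logDeriv (LFunction χ) s₁‖ ≤ ‖logDerivError χ X s₁‖ +
      ‖dirichletPoly (fun m => LambdaX X m * χ m) (X ^ 2) s₁‖ := norm_le_add_norm_add _ _
  have hS := norm_nonneg (dirichletPoly (fun m => LambdaX X m * χ m) (X ^ 2) s₁)
  rw [EchiT_eq]
  rw [← hs₁] at hσ_bound hσ₁_bound ⊢
  rw [him] at hmaj
  nlinarith [mul_nonneg logDerivConst_pos.le hS, mul_nonneg logDerivConst_pos.le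
    (zero_le_one.trans hlog)]

end Conclusion

theorem log_deriv_L_approximation_general :
    ∃ C > (0 : ℝ), ∀ (M : ℕ) [NeZero M] (χ : DirichletCharacter ℂ M), GRHchar χ →
      ∀ t X : ℝ, 4 ≤ X → X ≤ t ^ 2 → ∀ σ : ℝ, sigma1 X ≤ σ →
      ‖deriv (LFunction χ) (σ + I * t) / LFunction χ (σ + I * t)
          + ∑ m ∈ Finset.Icc 1 ⌊X ^ 2⌋₊,
              (LambdaX X m : ℂ) * χ (m : ZMod M) * (m : ℂ) ^ (-((σ : ℂ) + I * t))‖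
        ≤ C * EchiT χ X t :=
  ⟨4 + 2 * logDerivConst, by linarith [logDerivConst_pos], fun _ _ _ hχ _ _ hX hXt _ hσ =>
    norm_logDerivError_le hχ hX hXt hσ⟩

/-- **Equation (2.3)**: under GRH for `L(s,χ)`, for `σ ≥ σ₁ = 1/2 + 4/log X`,
`L'/L(s,χ) = -∑_{n ≤ X²} Λ_X(n) χ(n) n^{-s} + O(E_χ(X,t))` with an absolute implied
constant. -/
theorem log_deriv_L_approximation :
    ∃ C > (0 : ℝ), ∀ (M : ℕ) [NeZero M] (χ : DirichletCharacter ℂ M), χ.IsPrimitive →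
      GRHchar χ →
      ∀ t : ℝ, 2 ≤ |t| → ∀ X : ℝ, 4 ≤ X → X ≤ t ^ 2 →
      ∀ σ : ℝ, sigma1 X ≤ σ →
      ‖deriv (LFunction χ) (σ + I * t) / LFunction χ (σ + I * t)
          + ∑ m ∈ Finset.Icc 1 ⌊X ^ 2⌋₊,
              (LambdaX X m : ℂ) * χ (m : ZMod M) * (m : ℂ) ^ (-((σ : ℂ) + I * t))‖
        ≤ C * EchiT χ X t :=
  let ⟨C, hC, h⟩ := log_deriv_L_approximation_general
  ⟨C, hC, fun M _ χ _ hχ t _ X hX hXt σ hσ => h M χ hχ t X hX hXt σ hσ⟩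

end
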